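/- arXiv:2401.09278 — 5 statements merged into one kernel-verified Lean document; each statement's English description precedes it below -/
import Mathlib

section
/- There is a universal constant c > 0 and a randomized algorithm (StABL) for the adversarial multi-armed bandit problem with n arms over T rounds, using exactly two loss-value queries per round (the played arm plus one additional queried arm), such that for every contiguous interval I = [j,s] ⊆ [T] and every fixed arm i ∈ [n], the expected regret satisfies E[Σ_{t∈I} ℓ_t(x_t)] − Σ_{t∈I} ℓ_t(i) ≤ c · √(n·|I|·log n) · (log T)^{3/2}. -/
/-- One round of interaction in the two-query adversarial multi-armed bandit model is
recorded as `(x, x', ℓ x, ℓ x')`: the played arm, the additionally queried arm, and the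
two observed loss values. -/
abbrev MABRecord (n : ℕ) := Fin n × Fin n × ℝ × ℝ

/-- A (randomized) two-query bandit algorithm: given the history of past rounds
(played arm, queried arm and the two observed loss values for each past round), it
outputs a joint distribution over the pair (arm to play, arm to query), chosen before
the current loss vector is revealed. -/
def MABAlg (n : ℕ) := List (MABRecord n) → PMF (Fin n × Fin n)

/-- The distribution over length-`t` interaction histories produced by running
algorithm `act` against the oblivious loss sequence `ℓ`. -/
noncomputable def mabHist {n : ℕ} (act : MABAlg n) (ℓ : ℕ → Fin n → ℝ) :
    ℕ → PMF (List (MABRecord n))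
  | 0 => PMF.pure []
  | t + 1 => (mabHist act ℓ t).bind fun h => (act h).bind fun p =>
      PMF.pure (h ++ [(p.1, p.2, ℓ t p.1, ℓ t p.2)])

/-!
Each expert `e` runs its own learning rates `g t e`, and all experts' weights on the arms are mixed
into one played distribution, every expert counted with its current rate. A weight is multiplied by
`1 + g t e * r`, where `r` is an importance-weighted estimate of the instantaneous regret built from
the uniformly queried arm alone. Mixing with the rates makes the estimated regrets cancel, so the
total weight never changes; hence the log-weight of a single pair `(e, i)` is at most
`log (#experts * n)`, while in expectation it grows by the rate-scaled regret up to a second-order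
term. Since the query is uniform whatever arm is played, `r` has second moment at most `2 * n`.
An expert whose rate is a constant on a set of rounds and zero elsewhere thus yields a regret bound
on that set. One expert per interval makes `T ^ 2` experts, which costs only a factor logarithmic
in `T`.
-/

namespace StABL

section Expectation

variable {α β : Type*}

/-- The expectation of a real function under a discrete distribution. It is meaningful for
summable integrands, in particular for every `f` when `μ` has finite support. -/
noncomputable def expect (μ : PMF α) (f : α → ℝ) : ℝ :=
  ∑' a, (μ a).toReal * f a

lemma toReal_apply_mem_Icc (μ : PMF α) (a : α) : (μ a).toReal ∈ Set.Icc (0 : ℝ) 1 :=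
  ⟨ENNReal.toReal_nonneg,
    ENNReal.toReal_le_of_le_ofReal zero_le_one (by simpa using μ.coe_le_one a)⟩

lemma summable_toReal_mul {μ : PMF α} (hμ : μ.support.Finite) (f : α → ℝ) :
    Summable fun a => (μ a).toReal * f a :=
  summable_of_hasFiniteSupport (hμ.subset fun a ha hzero => ha (by simp [hzero]))

lemma expect_const (μ : PMF α) (c : ℝ) : expect μ (fun _ => c) = c := by
  rw [expect, tsum_mul_right, ← ENNReal.tsum_toReal_eq μ.apply_ne_top, μ.tsum_coe,
    ENNReal.toReal_one, one_mul]

lemma expect_const_mul (μ : PMF α) (c : ℝ) (f : α → ℝ) :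
    (expect μ fun a => c * f a) = c * expect μ f := by
  simp only [expect, mul_left_comm, tsum_mul_left]

lemma expect_add {μ : PMF α} (hμ : μ.support.Finite) (f g : α → ℝ) :
    (expect μ fun a => f a + g a) = expect μ f + expect μ g := by
  simp only [expect, mul_add]
  exact (summable_toReal_mul hμ f).tsum_add (summable_toReal_mul hμ g)

lemma expect_sub {μ : PMF α} (hμ : μ.support.Finite) (f g : α → ℝ) :
    (expect μ fun a => f a - g a) = expect μ f - expect μ g := by
  simp only [expect, mul_sub]
  exact (summable_toReal_mul hμ f).tsum_sub (summable_toReal_mul hμ g)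

lemma expect_mono {μ : PMF α} (hμ : μ.support.Finite) {f g : α → ℝ}
    (hfg : ∀ a ∈ μ.support, f a ≤ g a) : expect μ f ≤ expect μ g := by
  refine (summable_toReal_mul hμ f).tsum_le_tsum (fun a => ?_) (summable_toReal_mul hμ g)
  by_cases ha : a ∈ μ.support
  · exact mul_le_mul_of_nonneg_left (hfg a ha) ENNReal.toReal_nonneg
  · simp [(μ.apply_eq_zero_iff a).2 ha]

lemma expect_le_of_forall_le {μ : PMF α} (hμ : μ.support.Finite) {f : α → ℝ} {c : ℝ}
    (hf : ∀ a ∈ μ.support, f a ≤ c) : expect μ f ≤ c :=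
  (expect_mono hμ hf).trans_eq (expect_const μ c)

lemma expect_eq_sum [Fintype α] (μ : PMF α) (f : α → ℝ) :
    expect μ f = ∑ a, (μ a).toReal * f a :=
  tsum_fintype _

lemma expect_pure (a : α) (f : α → ℝ) : expect (PMF.pure a) f = f a := by
  rw [expect, tsum_eq_single a fun b hb => by simp [PMF.pure_apply_of_ne _ _ hb]]
  simp

lemma expect_bind {μ : PMF α} {ν : α → PMF β} (hμ : μ.support.Finite)
    (hν : ∀ a, (ν a).support.Finite) (f : β → ℝ) :
    expect (μ.bind ν) f = expect μ fun a => expect (ν a) f := by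
  have hsummable :
      Summable (Function.uncurry fun a b => (μ a).toReal * ((ν a b).toReal * f b)) := by
    refine summable_of_hasFiniteSupport
      ((hμ.biUnion fun a _ => (hν a).image (Prod.mk a)).subset fun ⟨a, b⟩ hab => ?_)
    have ha : a ∈ μ.support := fun hzero => hab (by simp [hzero])
    have hb : b ∈ (ν a).support := fun hzero => hab (by simp [hzero])
    exact Set.mem_biUnion ha (Set.mem_image_of_mem _ hb)
  have happly (b : β) : (μ.bind ν b).toReal = ∑' a, (μ a).toReal * (ν a b).toReal := by
    rw [PMF.bind_apply, ENNReal.tsum_toReal_eq fun a =>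
      ENNReal.mul_ne_top (μ.apply_ne_top a) ((ν a).apply_ne_top b)]
    simp only [ENNReal.toReal_mul]
  calc expect (μ.bind ν) f = ∑' b, ∑' a, (μ a).toReal * ((ν a b).toReal * f b) := by
        simp only [expect, happly, ← tsum_mul_right, mul_assoc]
    _ = ∑' a, ∑' b, (μ a).toReal * ((ν a b).toReal * f b) := hsummable.tsum_comm
    _ = expect μ fun a => expect (ν a) f := by simp only [expect, tsum_mul_left]

lemma finite_support_bind {μ : PMF α} {ν : α → PMF β} (hμ : μ.support.Finite)
    (hν : ∀ a, (ν a).support.Finite) : (μ.bind ν).support.Finite := by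
  rw [PMF.support_bind]
  exact hμ.biUnion fun a _ => hν a

/-- The product distribution of two independent draws. -/
noncomputable def indep (μ : PMF α) (ν : PMF β) : PMF (α × β) :=
  μ.bind fun a => ν.bind fun b => PMF.pure (a, b)

lemma expect_indep {μ : PMF α} {ν : PMF β} (hμ : μ.support.Finite) (hν : ν.support.Finite)
    (f : α × β → ℝ) : expect (indep μ ν) f = expect μ fun a => expect ν fun b => f (a, b) := by
  have hpure (p : α × β) : (PMF.pure p).support.Finite := by simp
  rw [indep, expect_bind hμ fun a => finite_support_bind hν fun _ => hpure _]
  simp only [expect_bind hν fun _ => hpure _, expect_pure]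

lemma expect_indep_sub {μ : PMF α} {ν : PMF β} (hμ : μ.support.Finite) (hν : ν.support.Finite)
    (f : α → ℝ) (g : β → ℝ) :
    (expect (indep μ ν) fun p => f p.1 - g p.2) = expect μ f - expect ν g := by
  simp only [expect_indep hμ hν, expect_sub hν, expect_const, expect_sub hμ]

variable [Fintype α] [Nonempty α]

/-- The distribution proportional to the nonnegative part of `q`. It is uniform if `q` has no
positive part, which happens in rounds where all learning rates vanish. -/
noncomputable def proportional (q : α → ℝ) : PMF α :=
  open Classical in
  if hq : ∑' a, ENNReal.ofReal (q a) = 0 then PMF.uniformOfFintype α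
  else PMF.normalize (fun a => ENNReal.ofReal (q a)) hq
    (by simp [tsum_fintype, ENNReal.sum_eq_top])

lemma sum_mul_toReal_proportional {q : α → ℝ} (hq : ∀ a, 0 ≤ q a) (a : α) :
    (∑ b, q b) * (proportional q a).toReal = q a := by
  have htotal : ∑' b, ENNReal.ofReal (q b) = ENNReal.ofReal (∑ b, q b) := by
    rw [tsum_fintype, ENNReal.ofReal_sum_of_nonneg fun b _ => hq b]
  have hsum : 0 ≤ ∑ b, q b := Finset.sum_nonneg fun b _ => hq b
  rcases hsum.eq_or_lt with hzero | hpos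
  · rw [← hzero, zero_mul]
    exact ((Fintype.sum_eq_zero_iff_of_nonneg hq).1 hzero.symm ▸ rfl : q a = 0).symm
  · have hne : ∑' b, ENNReal.ofReal (q b) ≠ 0 := htotal ▸ (ENNReal.ofReal_pos.2 hpos).ne'
    rw [proportional, dif_neg hne, PMF.normalize_apply, htotal, ENNReal.toReal_mul,
      ENNReal.toReal_inv, ENNReal.toReal_ofReal hsum, ENNReal.toReal_ofReal (hq a)]
    field_simp

lemma expect_uniformOfFintype (f : α → ℝ) :
    expect (PMF.uniformOfFintype α) f = (Fintype.card α : ℝ)⁻¹ * ∑ a, f a := by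
  simp [expect_eq_sum, Finset.mul_sum]

end Expectation

section RegretEstimate

variable {n : ℕ}

/-- The importance-weighted estimate of the instantaneous regret of an arm drawn from `P` against
arm `i`, when the uniformly random query `k` returned the loss `y`. -/
noncomputable def regretEst (P : PMF (Fin n)) (k : Fin n) (y : ℝ) (i : Fin n) : ℝ :=
  n * y * ((P k).toReal - if k = i then 1 else 0)

lemma abs_toReal_apply_sub_ite_le_one (P : PMF (Fin n)) (k i : Fin n) :
    |(P k).toReal - if k = i then 1 else 0| ≤ 1 := by
  obtain ⟨h0, h1⟩ := toReal_apply_mem_Icc P k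
  rw [abs_le]
  split_ifs <;> constructor <;> linarith

lemma abs_regretEst_le (P : PMF (Fin n)) (k : Fin n) {y : ℝ} (hy : y ∈ Set.Icc (0 : ℝ) 1)
    (i : Fin n) : |regretEst P k y i| ≤ n := by
  rw [regretEst, abs_mul, abs_mul, Nat.abs_cast, abs_of_nonneg hy.1, mul_assoc]
  exact mul_le_of_le_one_right n.cast_nonneg
    (mul_le_one₀ hy.2 (abs_nonneg _) (abs_toReal_apply_sub_ite_le_one P k i))

lemma neg_half_le_mul_regretEst {η : ℝ} (hη : η ∈ Set.Icc (0 : ℝ) (1 / (2 * n)))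
    (P : PMF (Fin n)) (k : Fin n) {y : ℝ} (hy : y ∈ Set.Icc (0 : ℝ) 1) (i : Fin n) :
    -(1 / 2) ≤ η * regretEst P k y i := by
  have hn : (0 : ℝ) < n := Nat.cast_pos.2 k.pos
  refine neg_le_of_abs_le ?_
  calc |η * regretEst P k y i| = η * |regretEst P k y i| := by rw [abs_mul, abs_of_nonneg hη.1]
    _ ≤ 1 / (2 * n) * n := by
        gcongr
        exacts [hη.2, abs_regretEst_le P k hy i]
    _ = 1 / 2 := by field_simp

lemma expect_regretEst_self (P : PMF (Fin n)) (k : Fin n) (y : ℝ) :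
    expect P (regretEst P k y) = 0 := by
  have hcoord : (expect P fun i => if k = i then 1 else 0) = (P k).toReal := by
    simp [expect_eq_sum]
  unfold regretEst
  simp only [expect_const_mul, expect_sub (Set.toFinite _), expect_const, hcoord, sub_self,
    mul_zero]

variable [NeZero n]

lemma expect_uniformOfFintype_regretEst (P : PMF (Fin n)) (ℓ : Fin n → ℝ) (i : Fin n) :
    (expect (PMF.uniformOfFintype (Fin n)) fun k => regretEst P k (ℓ k) i) =
      expect P ℓ - ℓ i := by
  have hn : (n : ℝ) ≠ 0 := NeZero.ne _
  rw [expect_uniformOfFintype, Fintype.card_fin, expect_eq_sum]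
  simp only [regretEst, mul_assoc, ← Finset.mul_sum, inv_mul_cancel_left₀ hn]
  simp only [mul_sub, Finset.sum_sub_distrib, mul_ite, mul_one, mul_zero, Finset.sum_ite_eq',
    Finset.mem_univ, if_true, mul_comm]

lemma expect_uniformOfFintype_sq_regretEst_le (P : PMF (Fin n)) {ℓ : Fin n → ℝ}
    (hℓ : ∀ i, ℓ i ∈ Set.Icc (0 : ℝ) 1) (i : Fin n) :
    (expect (PMF.uniformOfFintype (Fin n)) fun k => regretEst P k (ℓ k) i ^ 2) ≤ 2 * n := by
  have hn : (n : ℝ) ≠ 0 := NeZero.ne _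
  have hpoint (k : Fin n) :
      regretEst P k (ℓ k) i ^ 2 ≤ n ^ 2 * ((P k).toReal + if k = i then 1 else 0) := by
    obtain ⟨h0, h1⟩ := toReal_apply_mem_Icc P k
    have hdiff : ((P k).toReal - if k = i then 1 else 0) ^ 2 ≤
        (P k).toReal + if k = i then 1 else 0 := by
      split_ifs <;> nlinarith
    have hloss : ℓ k ^ 2 ≤ 1 := pow_le_one₀ (hℓ k).1 (hℓ k).2
    rw [regretEst, mul_assoc, mul_pow, mul_pow]
    gcongr
    exact (mul_le_of_le_one_left (sq_nonneg _) hloss).trans hdiff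
  have hmass : ∑ k, ((P k).toReal + if k = i then 1 else 0) = 2 := by
    have hP : ∑ k, (P k).toReal = 1 := by simpa [expect_eq_sum] using expect_const P 1
    rw [Finset.sum_add_distrib, hP]
    simp only [Finset.sum_ite_eq', Finset.mem_univ, if_true]
    norm_num
  calc (expect (PMF.uniformOfFintype (Fin n)) fun k => regretEst P k (ℓ k) i ^ 2)
      ≤ expect (PMF.uniformOfFintype (Fin n)) fun k =>
          n ^ 2 * ((P k).toReal + if k = i then 1 else 0) :=
        expect_mono (Set.toFinite _) fun k _ => hpoint k
    _ = 2 * n := by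
        rw [expect_const_mul, expect_uniformOfFintype, hmass, Fintype.card_fin]
        field_simp

lemma sub_two_mul_sq_le_log_one_add {x : ℝ} (hx : -(1 / 2) ≤ x) :
    x - 2 * x ^ 2 ≤ Real.log (1 + x) := by
  have hpos : 0 < 1 + x := by linarith
  have hgap : 1 - (1 + x)⁻¹ - (x - 2 * x ^ 2) = x ^ 2 * (1 + 2 * x) / (1 + x) := by
    field_simp
    ring
  have hgap_nonneg : 0 ≤ x ^ 2 * (1 + 2 * x) / (1 + x) :=
    div_nonneg (mul_nonneg (sq_nonneg x) (by linarith)) hpos.le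
  linarith [Real.one_sub_inv_le_log_of_pos hpos]

lemma le_expect_log_one_add_mul_regretEst (P : PMF (Fin n)) {ℓ : Fin n → ℝ}
    (hℓ : ∀ i, ℓ i ∈ Set.Icc (0 : ℝ) 1) (i : Fin n) {η : ℝ}
    (hη : η ∈ Set.Icc (0 : ℝ) (1 / (2 * n))) :
    η * (expect P ℓ - ℓ i) - 4 * n * η ^ 2 ≤
      expect (PMF.uniformOfFintype (Fin n)) fun k => Real.log (1 + η * regretEst P k (ℓ k) i) := by
  set U := PMF.uniformOfFintype (Fin n)
  have hU : U.support.Finite := Set.toFinite _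
  have hsq := mul_le_mul_of_nonneg_left (expect_uniformOfFintype_sq_regretEst_le P hℓ i)
    (by positivity : 0 ≤ 2 * η ^ 2)
  calc η * (expect P ℓ - ℓ i) - 4 * n * η ^ 2
      ≤ η * (expect P ℓ - ℓ i) -
          2 * η ^ 2 * expect U fun k => regretEst P k (ℓ k) i ^ 2 := by linarith
    _ = expect U fun k =>
          η * regretEst P k (ℓ k) i - 2 * (η * regretEst P k (ℓ k) i) ^ 2 := by
        simp only [mul_pow, ← mul_assoc, expect_sub hU, expect_const_mul]
        rw [expect_uniformOfFintype_regretEst]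
    _ ≤ expect U fun k => Real.log (1 + η * regretEst P k (ℓ k) i) :=
        expect_mono hU fun k _ =>
          sub_two_mul_sq_le_log_one_add (neg_half_le_mul_regretEst hη P k (hℓ k) i)

lemma expect_indep_uniformOfFintype_le (P : PMF (Fin n)) {ℓ : Fin n → ℝ}
    (hℓ : ∀ i, ℓ i ∈ Set.Icc (0 : ℝ) 1) (i : Fin n) {η : ℝ}
    (hη : η ∈ Set.Icc (0 : ℝ) (1 / (2 * n))) :
    (expect (indep P (PMF.uniformOfFintype (Fin n))) fun p =>
      η * ℓ p.1 - Real.log (1 + η * regretEst P p.2 (ℓ p.2) i)) ≤ η * ℓ i + 4 * n * η ^ 2 := by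
  rw [expect_indep_sub (Set.toFinite _) (Set.toFinite _) (fun x => η * ℓ x)
    fun k => Real.log (1 + η * regretEst P k (ℓ k) i), expect_const_mul]
  linarith [le_expect_log_one_add_mul_regretEst P hℓ i hη]

end RegretEstimate

section History

variable {n : ℕ}

/-- The loss suffered in round `t` of a history, with the value `0` for rounds not yet played. -/
noncomputable def playedLoss (h : List (MABRecord n)) (t : ℕ) : ℝ :=
  (h.map fun rec => rec.2.2.1).getD t 0

lemma playedLoss_append_of_lt {h : List (MABRecord n)} {t : ℕ} (ht : t < h.length)
    (r : MABRecord n) : playedLoss (h ++ [r]) t = playedLoss h t := by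
  rw [playedLoss, List.map_append, List.getD_append _ _ _ _ (by simpa using ht), playedLoss]

lemma playedLoss_append_length (h : List (MABRecord n)) (r : MABRecord n) :
    playedLoss (h ++ [r]) h.length = r.2.2.1 := by
  simp [playedLoss]

/-- The history `h` reports only losses in `[0, 1]`. -/
def LossesBounded (h : List (MABRecord n)) : Prop :=
  ∀ r ∈ h, r.2.2.1 ∈ Set.Icc (0 : ℝ) 1 ∧ r.2.2.2 ∈ Set.Icc (0 : ℝ) 1

lemma LossesBounded.playedLoss_le_one {h : List (MABRecord n)} (hh : LossesBounded h) (t : ℕ) :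
    playedLoss h t ≤ 1 := by
  rw [playedLoss, List.getD_eq_getElem?_getD, List.getElem?_map]
  cases hr : h[t]? with
  | none => exact zero_le_one
  | some r => exact (hh r (List.mem_of_getElem? hr)).1.2

/-- The record of a round with loss vector `ℓ` in which arm `p.1` is played and arm `p.2` is
queried. -/
def observe (ℓ : Fin n → ℝ) (p : Fin n × Fin n) : MABRecord n :=
  (p.1, p.2, ℓ p.1, ℓ p.2)

lemma finite_support_mabHist (act : MABAlg n) (ℓ : ℕ → Fin n → ℝ) (t : ℕ) :
    (mabHist act ℓ t).support.Finite := by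
  induction t with
  | zero => simp [mabHist]
  | succ t ih =>
    exact finite_support_bind ih fun h => finite_support_bind (Set.toFinite _) fun p => by simp

lemma length_eq_and_lossesBounded_of_mem_support_mabHist {act : MABAlg n} {ℓ : ℕ → Fin n → ℝ}
    (hℓ : ∀ t i, ℓ t i ∈ Set.Icc (0 : ℝ) 1) {t : ℕ} {h : List (MABRecord n)}
    (hh : h ∈ (mabHist act ℓ t).support) : h.length = t ∧ LossesBounded h := by
  induction t generalizing h with
  | zero => simp_all [mabHist, LossesBounded]
  | succ t ih =>
    simp only [mabHist, PMF.mem_support_bind_iff, PMF.support_pure, Set.mem_singleton_iff] at hh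
    obtain ⟨h', hh', p, -, rfl⟩ := hh
    obtain ⟨hlen, hbdd⟩ := ih hh'
    refine ⟨by simp [hlen], fun r hr => ?_⟩
    rcases List.mem_append.1 hr with hold | hnew
    · exact hbdd r hold
    · rw [List.mem_singleton.1 hnew]
      exact ⟨hℓ t p.1, hℓ t p.2⟩

lemma expect_mabHist_succ (act : MABAlg n) (ℓ : ℕ → Fin n → ℝ) (t : ℕ)
    (f : List (MABRecord n) → ℝ) :
    expect (mabHist act ℓ (t + 1)) f =
      expect (mabHist act ℓ t) fun h => expect (act h) fun p => f (h ++ [observe (ℓ t) p]) := by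
  have hpure (h : List (MABRecord n)) : (PMF.pure h).support.Finite := by simp
  refine (expect_bind (finite_support_mabHist act ℓ t) (fun h =>
    finite_support_bind (Set.toFinite _) fun _ => hpure _) f).trans ?_
  congr 1 with h
  rw [expect_bind (Set.toFinite _) fun _ => hpure _]
  simp only [expect_pure, observe]

lemma expect_sum_playedLoss_le_card (act : MABAlg n) {ℓ : ℕ → Fin n → ℝ}
    (hℓ : ∀ t i, ℓ t i ∈ Set.Icc (0 : ℝ) 1) (T : ℕ) (A : Finset ℕ) :
    (expect (mabHist act ℓ T) fun h => ∑ t ∈ A, playedLoss h t) ≤ A.card := by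
  refine expect_le_of_forall_le (finite_support_mabHist act ℓ T) fun h hh => ?_
  have hbdd := (length_eq_and_lossesBounded_of_mem_support_mabHist hℓ hh).2
  simpa using Finset.sum_le_card_nsmul A (playedLoss h) 1 fun t _ => hbdd.playedLoss_le_one t

end History

section Algorithm

variable {ι : Type*} [Fintype ι] {n : ℕ} [NeZero n]

/-- The distribution of the played arm under expert learning rates `η` and weights `w`. -/
noncomputable def playDist (η : ι → ℝ) (w : ι → Fin n → ℝ) : PMF (Fin n) :=
  proportional fun i => ∑ e, η e * w e i

/-- The multiplicative update of the weights `w` after a round with record `r`, run with learning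
rates `η`. -/
noncomputable def reweight (η : ι → ℝ) (w : ι → Fin n → ℝ) (r : MABRecord n) : ι → Fin n → ℝ :=
  fun e i => w e i * (1 + η e * regretEst (playDist η w) r.2.1 r.2.2.2 i)

/-- The weights after a history, starting from `1`, when expert `e` has learning rate `g t e` in
round `t`. -/
noncomputable def weight (g : ℕ → ι → ℝ) (h : List (MABRecord n)) : ι → Fin n → ℝ :=
  h.zipIdx.foldl (fun w rt => reweight (g rt.2) w rt.1) 1

/-- The algorithm with learning rates `g`: it plays from the mixed weights of all experts and
queries an independent, uniformly random arm. -/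
noncomputable def stabl (g : ℕ → ι → ℝ) : MABAlg n := fun h =>
  indep (playDist (g h.length) (weight g h)) (PMF.uniformOfFintype (Fin n))

lemma weight_append_singleton (g : ℕ → ι → ℝ) (h : List (MABRecord n)) (r : MABRecord n) :
    weight g (h ++ [r]) = reweight (g h.length) (weight g h) r := by
  simp [weight, List.zipIdx_append]

lemma sum_reweight {η : ι → ℝ} (hη : ∀ e, 0 ≤ η e) {w : ι → Fin n → ℝ} (hw : ∀ e i, 0 ≤ w e i)
    (r : MABRecord n) : ∑ e, ∑ i, reweight η w r e i = ∑ e, ∑ i, w e i := by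
  set P := playDist η w
  have hP (i : Fin n) : (∑ b, ∑ e, η e * w e b) * (P i).toReal = ∑ e, η e * w e i :=
    sum_mul_toReal_proportional
      (fun i => Finset.sum_nonneg fun e _ => mul_nonneg (hη e) (hw e i)) i
  have hcancel : ∑ e, ∑ i, w e i * (η e * regretEst P r.2.1 r.2.2.2 i) = 0 := by
    calc ∑ e, ∑ i, w e i * (η e * regretEst P r.2.1 r.2.2.2 i)
        = ∑ i, (∑ e, η e * w e i) * regretEst P r.2.1 r.2.2.2 i := by
          rw [Finset.sum_comm]
          refine Finset.sum_congr rfl fun i _ => ?_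
          rw [Finset.sum_mul]
          exact Finset.sum_congr rfl fun e _ => by ring
      _ = (∑ b, ∑ e, η e * w e b) * expect P (regretEst P r.2.1 r.2.2.2) := by
          rw [expect_eq_sum, Finset.mul_sum]
          exact Finset.sum_congr rfl fun i _ => by rw [← hP i, mul_assoc]
      _ = 0 := by rw [expect_regretEst_self, mul_zero]
  simp only [reweight, mul_add, mul_one, Finset.sum_add_distrib]
  rw [hcancel, add_zero]

variable {g : ℕ → ι → ℝ}

lemma weight_pos (hg : ∀ t e, g t e ∈ Set.Icc (0 : ℝ) (1 / (2 * n)))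
    {h : List (MABRecord n)} (hh : LossesBounded h) (e : ι) (i : Fin n) : 0 < weight g h e i := by
  induction h using List.reverseRecOn with
  | nil => exact zero_lt_one
  | append_singleton h r ih =>
    obtain ⟨hh', hr⟩ := List.forall_mem_append.1 hh
    rw [weight_append_singleton]
    refine mul_pos (ih hh') ?_
    linarith [neg_half_le_mul_regretEst (hg h.length e)
      (playDist (g h.length) (weight g h)) r.2.1 (hr r (List.mem_singleton_self r)).2 i]

lemma sum_weight (hg : ∀ t e, g t e ∈ Set.Icc (0 : ℝ) (1 / (2 * n)))
    {h : List (MABRecord n)} (hh : LossesBounded h) :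
    ∑ e, ∑ i, weight g h e i = Fintype.card ι * n := by
  induction h using List.reverseRecOn with
  | nil => simp [weight]
  | append_singleton h r ih =>
    have hh' : LossesBounded h := (List.forall_mem_append.1 hh).1
    rw [weight_append_singleton, sum_reweight (fun e => (hg _ e).1)
      fun e i => (weight_pos hg hh' e i).le, ih hh']

lemma log_weight_le (hg : ∀ t e, g t e ∈ Set.Icc (0 : ℝ) (1 / (2 * n)))
    {h : List (MABRecord n)} (hh : LossesBounded h) (e : ι) (i : Fin n) :
    Real.log (weight g h e i) ≤ Real.log (Fintype.card ι * n) := by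
  have hpos := fun e i => weight_pos hg hh e i
  refine Real.log_le_log (hpos e i) ?_
  calc weight g h e i ≤ ∑ i, weight g h e i :=
        Finset.single_le_sum (fun i _ => (hpos e i).le) (Finset.mem_univ i)
    _ ≤ ∑ e, ∑ i, weight g h e i :=
        Finset.single_le_sum (f := fun e => ∑ i, weight g h e i)
          (fun e _ => Finset.sum_nonneg fun i _ => (hpos e i).le) (Finset.mem_univ e)
    _ = Fintype.card ι * n := sum_weight hg hh

/-- The cumulative suffered loss, with round `t` scaled by `g t`. -/
noncomputable def scaledLoss (g : ℕ → ℝ) (h : List (MABRecord n)) : ℝ :=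
  ∑ t ∈ Finset.range h.length, g t * playedLoss h t

omit [NeZero n] in
lemma scaledLoss_append_singleton (g : ℕ → ℝ) (h : List (MABRecord n)) (r : MABRecord n) :
    scaledLoss g (h ++ [r]) = scaledLoss g h + g h.length * r.2.2.1 := by
  rw [scaledLoss, List.length_append, List.length_singleton, Finset.sum_range_succ,
    playedLoss_append_length, scaledLoss]
  congr 1
  exact Finset.sum_congr rfl fun t ht => by rw [playedLoss_append_of_lt (Finset.mem_range.1 ht)]

/-- The rate-scaled loss of the algorithm minus the log-weight of arm `i` for expert `e`. -/
noncomputable def potential (g : ℕ → ι → ℝ) (e : ι) (i : Fin n) (h : List (MABRecord n)) : ℝ :=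
  scaledLoss (g · e) h - Real.log (weight g h e i)

lemma potential_append_observe (hg : ∀ t e, g t e ∈ Set.Icc (0 : ℝ) (1 / (2 * n)))
    {h : List (MABRecord n)} (hh : LossesBounded h) {ℓ : Fin n → ℝ}
    (hℓ : ∀ i, ℓ i ∈ Set.Icc (0 : ℝ) 1) (e : ι) (i : Fin n) (p : Fin n × Fin n) :
    potential g e i (h ++ [observe ℓ p]) = potential g e i h + (g h.length e * ℓ p.1 -
      Real.log (1 + g h.length e *
        regretEst (playDist (g h.length) (weight g h)) p.2 (ℓ p.2) i)) := by
  set P := playDist (g h.length) (weight g h)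
  have hpos : 0 < 1 + g h.length e * regretEst P p.2 (ℓ p.2) i := by
    linarith [neg_half_le_mul_regretEst (hg h.length e) P p.2 (hℓ p.2) i]
  have hlog : Real.log (weight g (h ++ [observe ℓ p]) e i) = Real.log (weight g h e i) +
      Real.log (1 + g h.length e * regretEst P p.2 (ℓ p.2) i) := by
    rw [weight_append_singleton, reweight]
    exact Real.log_mul (weight_pos hg hh e i).ne' hpos.ne'
  rw [potential, potential, scaledLoss_append_singleton, hlog, observe]
  ring

lemma expect_potential_append_observe_le (hg : ∀ t e, g t e ∈ Set.Icc (0 : ℝ) (1 / (2 * n)))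
    {h : List (MABRecord n)} (hh : LossesBounded h) {ℓ : Fin n → ℝ}
    (hℓ : ∀ i, ℓ i ∈ Set.Icc (0 : ℝ) 1) (e : ι) (i : Fin n) :
    (expect (stabl g h) fun p => potential g e i (h ++ [observe ℓ p])) ≤
      potential g e i h + (g h.length e * ℓ i + 4 * n * g h.length e ^ 2) := by
  simp only [potential_append_observe hg hh hℓ]
  rw [expect_add (Set.toFinite _), expect_const]
  gcongr
  exact expect_indep_uniformOfFintype_le _ hℓ i (hg h.length e)

lemma expect_potential_le (hg : ∀ t e, g t e ∈ Set.Icc (0 : ℝ) (1 / (2 * n)))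
    {ℓ : ℕ → Fin n → ℝ} (hℓ : ∀ t i, ℓ t i ∈ Set.Icc (0 : ℝ) 1) (e : ι) (i : Fin n) (T : ℕ) :
    expect (mabHist (stabl g) ℓ T) (potential g e i) ≤
      ∑ t ∈ Finset.range T, (g t e * ℓ t i + 4 * n * g t e ^ 2) := by
  induction T with
  | zero => simp [mabHist, expect_pure, potential, scaledLoss, weight]
  | succ T ih =>
    have hfin := finite_support_mabHist (stabl g) ℓ T
    calc expect (mabHist (stabl g) ℓ (T + 1)) (potential g e i)
        = expect (mabHist (stabl g) ℓ T) fun h =>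
            expect (stabl g h) fun p => potential g e i (h ++ [observe (ℓ T) p]) :=
          expect_mabHist_succ ..
      _ ≤ expect (mabHist (stabl g) ℓ T) fun h =>
            potential g e i h + (g T e * ℓ T i + 4 * n * g T e ^ 2) := by
          refine expect_mono hfin fun h hh => ?_
          obtain ⟨rfl, hbdd⟩ := length_eq_and_lossesBounded_of_mem_support_mabHist hℓ hh
          exact expect_potential_append_observe_le hg hbdd (hℓ _) e i
      _ = expect (mabHist (stabl g) ℓ T) (potential g e i) +
            (g T e * ℓ T i + 4 * n * g T e ^ 2) := by rw [expect_add hfin, expect_const]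
      _ ≤ ∑ t ∈ Finset.range (T + 1), (g t e * ℓ t i + 4 * n * g t e ^ 2) := by
          rw [Finset.sum_range_succ]
          gcongr

theorem expect_scaledLoss_le (hg : ∀ t e, g t e ∈ Set.Icc (0 : ℝ) (1 / (2 * n)))
    {ℓ : ℕ → Fin n → ℝ} (hℓ : ∀ t i, ℓ t i ∈ Set.Icc (0 : ℝ) 1) (e : ι) (i : Fin n) (T : ℕ) :
    expect (mabHist (stabl g) ℓ T) (scaledLoss (g · e)) ≤
      ∑ t ∈ Finset.range T, (g t e * ℓ t i + 4 * n * g t e ^ 2) +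
        Real.log (Fintype.card ι * n) := by
  have hfin := finite_support_mabHist (stabl g) ℓ T
  calc expect (mabHist (stabl g) ℓ T) (scaledLoss (g · e))
      ≤ expect (mabHist (stabl g) ℓ T) fun h =>
          potential g e i h + Real.log (Fintype.card ι * n) := by
        refine expect_mono hfin fun h hh => ?_
        have hbdd := (length_eq_and_lossesBounded_of_mem_support_mabHist hℓ hh).2
        rw [potential]
        linarith [log_weight_le hg hbdd e i]
    _ = expect (mabHist (stabl g) ℓ T) (potential g e i) + Real.log (Fintype.card ι * n) := by
        rw [expect_add hfin, expect_const]
    _ ≤ _ := by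
        gcongr
        exact expect_potential_le hg hℓ e i T

end Algorithm

section Tuning

/-- The learning rate for a set of `m` rounds when `L` bounds the logarithm of the number of
weights. It is capped at `1 / (2 * n)`, which keeps the weights positive. -/
noncomputable def tunedRate (n m : ℕ) (L : ℝ) : ℝ :=
  min √(L / (n * m)) (1 / (2 * n))

lemma tunedRate_mem_Icc (n m : ℕ) (L : ℝ) :
    tunedRate n m L ∈ Set.Icc (0 : ℝ) (1 / (2 * n)) :=
  ⟨le_min (Real.sqrt_nonneg _) (by positivity), min_le_right _ _⟩

/-- The learning rate in round `t` of the expert in charge of the set of rounds `A`. -/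
noncomputable def setRate (n : ℕ) (L : ℝ) (t : ℕ) (A : Finset ℕ) : ℝ :=
  if t ∈ A then tunedRate n A.card L else 0

lemma setRate_mem_Icc (n : ℕ) (L : ℝ) (t : ℕ) (A : Finset ℕ) :
    setRate n L t A ∈ Set.Icc (0 : ℝ) (1 / (2 * n)) := by
  rw [setRate]
  split_ifs
  exacts [tunedRate_mem_Icc n A.card L, ⟨le_rfl, by positivity⟩]

lemma sum_setRate_mul {A : Finset ℕ} {T : ℕ} (hA : A ⊆ Finset.range T) (n : ℕ) (L : ℝ)
    (f : ℕ → ℝ) :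
    ∑ t ∈ Finset.range T, setRate n L t A * f t = tunedRate n A.card L * ∑ t ∈ A, f t := by
  simp only [setRate, ite_mul, zero_mul, Finset.sum_ite_mem, Finset.inter_eq_right.2 hA,
    Finset.mul_sum]

/-- The uncapped rate balances the second-order term against `L`. If the cap is active, the set is
so short that `r ≤ m` suffices. -/
lemma le_five_mul_sqrt_of_tunedRate_mul_le {n m : ℕ} {L r : ℝ} (hn : 0 < n) (hL : 0 < L)
    (hrm : r ≤ m)
    (hr : tunedRate n m L * r ≤ 4 * n * tunedRate n m L ^ 2 * m + L) :
    r ≤ 5 * √(n * m * L) := by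
  rcases m.eq_zero_or_pos with rfl | hm
  · exact hrm.trans (by simp)
  have hv : (0 : ℝ) < n * m := by positivity
  rcases le_total √(L / (n * m)) (1 / (2 * n)) with huncapped | hcapped
  · rw [tunedRate, min_eq_left huncapped] at hr
    have hsecond : 4 * n * √(L / (n * m)) ^ 2 * m = 4 * L := by
      rw [Real.sq_sqrt (by positivity)]
      field_simp
    have hbalance : √(L / (n * m)) * √(n * m * L) = L := by
      rw [← Real.sqrt_mul (by positivity), show L / (n * m) * (n * m * L) = L ^ 2 by field_simp,
        Real.sqrt_sq hL.le]
    refine le_of_mul_le_mul_left ?_ (by positivity : 0 < √(L / (n * m)))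
    linarith
  · have hshort : (m : ℝ) ≤ 4 * (n * L) := by
      have h := (Real.le_sqrt' (by positivity)).1 hcapped
      rw [div_pow, one_pow, div_le_div_iff₀ (by positivity) hv] at h
      refine le_of_mul_le_mul_left ?_ (by positivity : (0 : ℝ) < n)
      linarith
    have hhalf : (m : ℝ) / 2 ≤ √(n * m * L) := by
      refine Real.le_sqrt_of_sq_le ?_
      linarith [mul_le_mul_of_nonneg_left hshort m.cast_nonneg]
    linarith [Real.sqrt_nonneg (n * m * L)]

variable {ι : Type*} [Fintype ι] (S : ι → Finset ℕ) {n : ℕ} [NeZero n] {ℓ : ℕ → Fin n → ℝ}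

lemma tunedRate_mul_regret_le (L : ℝ) (hℓ : ∀ t i, ℓ t i ∈ Set.Icc (0 : ℝ) 1) {T : ℕ} {e : ι}
    (he : S e ⊆ Finset.range T) (i : Fin n) :
    tunedRate n (S e).card L *
        ((expect (mabHist (stabl fun t e => setRate n L t (S e)) ℓ T) fun h =>
          ∑ t ∈ S e, playedLoss h t) - ∑ t ∈ S e, ℓ t i) ≤
      4 * n * tunedRate n (S e).card L ^ 2 * (S e).card + Real.log (Fintype.card ι * n) := by
  set η := tunedRate n (S e).card L
  set μ := mabHist (stabl fun t e => setRate n L t (S e)) ℓ T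
  have hloss : (η * expect μ fun h => ∑ t ∈ S e, playedLoss h t) ≤
      expect μ (scaledLoss fun t => setRate n L t (S e)) := by
    rw [← expect_const_mul]
    refine expect_mono (finite_support_mabHist _ ℓ T) fun h hh => ?_
    obtain ⟨rfl, -⟩ := length_eq_and_lossesBounded_of_mem_support_mabHist hℓ hh
    rw [scaledLoss, sum_setRate_mul he]
  have hsecond : ∑ t ∈ Finset.range T, 4 * n * setRate n L t (S e) ^ 2 =
      4 * n * η ^ 2 * (S e).card := by
    simp only [← Finset.mul_sum, sq, sum_setRate_mul he]
    simp only [setRate, Finset.sum_ite_mem, Finset.inter_self, Finset.sum_const, nsmul_eq_mul]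
    ring
  have hregret := expect_scaledLoss_le (fun t e => setRate_mem_Icc n L t (S e)) hℓ e i T
  rw [Finset.sum_add_distrib, sum_setRate_mul he, hsecond] at hregret
  rw [mul_sub]
  linarith

end Tuning

lemma two_mul_add_le_mul_cube {a b : ℝ} (ha : 1 / 2 ≤ a) (hb : 1 / 2 ≤ b) :
    2 * b + a ≤ 36 * (a * b ^ 3) := by
  have hb_cube : b ≤ 4 * b ^ 3 := by
    nlinarith [mul_nonneg (by linarith : 0 ≤ b) (by nlinarith : 0 ≤ 4 * b ^ 2 - 1)]
  have hab : 0 ≤ (a - 1 / 2) * (b ^ 3 - 1 / 8) :=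
    mul_nonneg (by linarith) (by linarith)
  linarith

lemma half_le_log_natCast {k : ℕ} (hk : 2 ≤ k) : 1 / 2 ≤ Real.log k := by
  have hk' : (2 : ℝ) ≤ k := by exact_mod_cast hk
  linarith [Real.log_two_gt_d9, Real.log_le_log two_pos hk']

lemma sqrt_mul_log_sq_mul_le {n T : ℕ} (hn : 2 ≤ n) (hT : 2 ≤ T) {m : ℝ} (hm : 0 ≤ m) :
    √(n * m * Real.log (T * T * n)) ≤ 6 * √(n * m * Real.log n) * Real.log T ^ ((3 : ℝ) / 2) := by
  have hlogn := half_le_log_natCast hn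
  have hlogT := half_le_log_natCast hT
  have hlog : Real.log (T * T * n) = 2 * Real.log T + Real.log n := by
    rw [Real.log_mul (by positivity) (by positivity), Real.log_mul (by positivity) (by positivity)]
    ring
  have hpow : Real.log T ^ ((3 : ℝ) / 2) = √(Real.log T ^ 3) := by
    rw [Real.sqrt_eq_rpow, ← Real.rpow_natCast_mul (by linarith)]
    norm_num
  calc √(n * m * Real.log (T * T * n))
      ≤ √(6 ^ 2 * (n * m * Real.log n) * Real.log T ^ 3) := by
        refine Real.sqrt_le_sqrt ?_
        have := mul_le_mul_of_nonneg_left (two_mul_add_le_mul_cube hlogn hlogT)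
          (by positivity : (0 : ℝ) ≤ n * m)
        rw [hlog]
        linarith
    _ = 6 * √(n * m * Real.log n) * Real.log T ^ ((3 : ℝ) / 2) := by
        rw [hpow, Real.sqrt_mul (by positivity), Real.sqrt_mul (by positivity),
          Real.sqrt_sq (by norm_num)]

end StABL

theorem stabl_two_query_adaptive_regret_general {ι : Type*} [Fintype ι] (S : ι → Finset ℕ) {n : ℕ}
    (hn : 2 ≤ n) :
    ∃ act : MABAlg n,
      ∀ ℓ : ℕ → Fin n → ℝ, (∀ t i, ℓ t i ∈ Set.Icc (0 : ℝ) 1) →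
      ∀ T e, S e ⊆ Finset.range T → ∀ i : Fin n,
        (∑' h : List (MABRecord n), (mabHist act ℓ T h).toReal *
            ∑ t ∈ S e, ((h.map fun rec => rec.2.2.1).getD t 0))
          - ∑ t ∈ S e, ℓ t i
        ≤ 5 * √(n * (S e).card * Real.log (Fintype.card ι * n)) := by
  have : NeZero n := ⟨by omega⟩
  set L := Real.log (Fintype.card ι * n)
  refine ⟨StABL.stabl fun t e => StABL.setRate n L t (S e), fun ℓ hℓ T e he i => ?_⟩
  have hL : 0 < L := by
    have hcard : 1 ≤ Fintype.card ι := Fintype.card_pos_iff.2 ⟨e⟩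
    exact Real.log_pos (by exact_mod_cast (by nlinarith : 1 < Fintype.card ι * n))
  have hcomparator : 0 ≤ ∑ t ∈ S e, ℓ t i := Finset.sum_nonneg fun t _ => (hℓ t i).1
  exact StABL.le_five_mul_sqrt_of_tunedRate_mul_le (by omega) hL
    ((sub_le_self _ hcomparator).trans (StABL.expect_sum_playedLoss_le_card _ hℓ T (S e)))
    (StABL.tunedRate_mul_regret_le S L hℓ he i)

/-- Strongly adaptive regret with two queries (StABL).
There is a universal constant `c > 0` such that for every `n ≥ 2` arms and horizon
`T ≥ 2` there is a randomized two-query bandit algorithm such that, for every oblivious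
loss sequence with values in `[0,1]`, every contiguous interval `[j,s] ⊆ [T]` (rounds
indexed `0, …, T−1`) and every fixed arm `i`, the expected total loss suffered on the
interval exceeds that of arm `i` by at most `c √(n |I| log n) (log T)^{3/2}`, where
`|I| = s − j + 1`.  The suffered loss at round `t` is the third component of the `t`-th
history record, i.e. `ℓ t x_t`. -/
theorem stabl_two_query_adaptive_regret :
    ∃ c : ℝ, 0 < c ∧
      ∀ n T : ℕ, 2 ≤ n → 2 ≤ T →
        ∃ act : MABAlg n,
          ∀ ℓ : ℕ → Fin n → ℝ, (∀ t i, ℓ t i ∈ Set.Icc (0 : ℝ) 1) →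
          ∀ j s : ℕ, j ≤ s → s < T → ∀ i : Fin n,
            (∑' h : List (MABRecord n), (mabHist act ℓ T h).toReal *
                ∑ t ∈ Finset.Icc j s, ((h.map fun rec => rec.2.2.1).getD t 0))
              - ∑ t ∈ Finset.Icc j s, ℓ t i
            ≤ c * Real.sqrt (n * ((s : ℝ) - j + 1) * Real.log n) *
                Real.log T ^ ((3 : ℝ) / 2) := by
  refine ⟨30, by norm_num, fun n T hn hT => ?_⟩
  obtain ⟨act, hact⟩ := stabl_two_query_adaptive_regret_general
    (fun e : Fin T × Fin T => Finset.Icc (e.1 : ℕ) e.2) hn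
  refine ⟨act, fun ℓ hℓ j s hjs hsT i => ?_⟩
  have hsubset : Finset.Icc j s ⊆ Finset.range T := fun t ht =>
    Finset.mem_range.2 ((Finset.mem_Icc.1 ht).2.trans_lt hsT)
  have hlength : ((Finset.Icc j s).card : ℝ) = s - j + 1 := by
    rw [Nat.card_Icc, Nat.cast_sub (by omega)]
    push_cast
    ring
  have hregret := hact ℓ hℓ T (⟨j, hjs.trans_lt hsT⟩, ⟨s, hsT⟩) hsubset i
  have hbound := StABL.sqrt_mul_log_sq_mul_le hn hT (Finset.Icc j s).card.cast_nonneg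
  simp only [Fintype.card_prod, Fintype.card_fin, Nat.cast_mul, hlength] at hregret hbound
  linarith
end

section
/- Consider the exponential-weights (EXP3-type) algorithm over n arms with losses ℓ_1,…,ℓ_T ∈ [0,1]^n: weights start at w_1 = (1/n,…,1/n) and are updated by w_{t+1}(i) ∝ w_t(i)·exp(−η·ℓ̃_t(i)), where at each round t (given the history) a probability distribution z_t over [n] satisfying w_t(i) ≤ C·z_t(i) for all i is chosen, an index i_t ∼ z_t is sampled independently, and ℓ̃_t(i) = 1{i = i_t}·ℓ_t(i)/z_t(i). Then with step size η = √(log n / (T·n·C)), for every fixed arm i*: E[Σ_{t=1}^T ⟨ℓ_t, w_t⟩] − Σ_{t=1}^T ℓ_t(i*) ≤ 2·√(C·n·T·log n). -/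
/-- Exponential weights driven by importance-weighted loss estimators.
The history `h` lists the sampled indices, most recent first; `expWeights n ℓ η z h`
is the weight vector after processing the rounds recorded in `h`, starting from the
uniform weights `1/n` and updating by `w' i ∝ w i * exp (−η * ℓ̃ i)` where
`ℓ̃ i = 1{i = sampled} * ℓ t i / z h i`. -/
noncomputable def expWeights (n : ℕ) (ℓ : ℕ → Fin n → ℝ) (η : ℝ)
    (z : List (Fin n) → Fin n → ℝ) : List (Fin n) → Fin n → ℝ
  | [] => fun _ => 1 / n
  | i :: h => fun j =>
      expWeights n ℓ η z h j *
          Real.exp (-η * (if j = i then ℓ h.length j / z h j else 0)) /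
        ∑ a, expWeights n ℓ η z h a *
          Real.exp (-η * (if a = i then ℓ h.length a / z h a else 0))

/-- The distribution of the sampling history (most recent index first) after `t` rounds,
when at each round an index is drawn from `zP` applied to the current history. -/
noncomputable def sampleHist (n : ℕ) (zP : List (Fin n) → PMF (Fin n)) :
    ℕ → PMF (List (Fin n))
  | 0 => PMF.pure []
  | t + 1 => (sampleHist n zP t).bind fun h => (zP h).bind fun i => PMF.pure (i :: h)

/-!
Fix an arm `a` and follow the potential `η · regret − log w(a)` along the sampling history. The
normalizer of one update satisfies `log ∑ w exp (-η ℓ̃) ≤ -η ⟨ℓ̃, w⟩ + η² / 2 ⟨ℓ̃², w⟩`. Averaging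
over the sampled arm makes the linear terms exact, since the estimator is unbiased, and turns the
quadratic one into `∑ ℓ² w / z ≤ C n` by domination. So the potential grows by at most `η² C n / 2`
per round in expectation; it starts at `log n` and dominates `η · regret`, which gives
`log n / η + η T C n / 2` for the expected regret, equal to `3 / 2 √(C n T log n)` at the given `η`.
-/

section Expectation

variable {α β : Type*}

/-- The expectation of a real function `f` under a discrete distribution `p`. It is only meaningful
when the series is summable; otherwise the `tsum` is `0`. -/
noncomputable def expectation (p : PMF α) (f : α → ℝ) : ℝ :=
  ∑' a, (p a).toReal * f a

theorem summable_toReal_mul_of_finite_support {p : PMF α} (hp : p.support.Finite) (f : α → ℝ) :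
    Summable fun a => (p a).toReal * f a := by
  refine summable_of_hasFiniteSupport (hp.subset fun a ha => ?_)
  rw [PMF.mem_support_iff]
  intro hpa
  simp [hpa] at ha

theorem expectation_pure (a : α) (f : α → ℝ) : expectation (PMF.pure a) f = f a := by
  rw [expectation, tsum_eq_single a fun b hb => by simp [PMF.pure_apply, hb]]
  simp

theorem expectation_of_fintype [Fintype α] (p : PMF α) (f : α → ℝ) :
    expectation p f = ∑ a, (p a).toReal * f a :=
  tsum_fintype _

theorem expectation_const (p : PMF α) (c : ℝ) : expectation p (fun _ => c) = c := by
  rw [expectation, tsum_mul_right, ← ENNReal.tsum_toReal_eq p.apply_ne_top, p.tsum_coe,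
    ENNReal.toReal_one, one_mul]

theorem expectation_const_mul (p : PMF α) (c : ℝ) (f : α → ℝ) :
    expectation p (fun a => c * f a) = c * expectation p f := by
  simp only [expectation, mul_left_comm _ c, tsum_mul_left]

theorem expectation_add_const {p : PMF α} {f : α → ℝ}
    (hf : Summable fun a => (p a).toReal * f a) (c : ℝ) :
    expectation p (fun a => f a + c) = expectation p f + c := by
  have hc : Summable fun a => (p a).toReal * c :=
    (ENNReal.summable_toReal p.tsum_coe_ne_top).mul_right c
  conv_rhs => rw [← expectation_const p c]
  simp only [expectation, mul_add]
  exact hf.tsum_add hc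

theorem expectation_mono {p : PMF α} {f g : α → ℝ}
    (hf : Summable fun a => (p a).toReal * f a) (hg : Summable fun a => (p a).toReal * g a)
    (hfg : ∀ a ∈ p.support, f a ≤ g a) : expectation p f ≤ expectation p g := by
  refine hf.tsum_le_tsum (fun a => ?_) hg
  by_cases ha : a ∈ p.support
  · exact mul_le_mul_of_nonneg_left (hfg a ha) ENNReal.toReal_nonneg
  · simp [(p.apply_eq_zero_iff a).2 ha]

theorem expectation_congr {p : PMF α} {f g : α → ℝ} (hfg : ∀ a ∈ p.support, f a = g a) :
    expectation p f = expectation p g := by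
  refine tsum_congr fun a => ?_
  by_cases ha : a ∈ p.support
  · rw [hfg a ha]
  · simp [(p.apply_eq_zero_iff a).2 ha]

theorem toReal_bind_apply (p : PMF α) (q : α → PMF β) (b : β) :
    (p.bind q b).toReal = ∑' a, (p a).toReal * (q a b).toReal := by
  rw [PMF.bind_apply,
    ENNReal.tsum_toReal_eq fun a => ENNReal.mul_ne_top (p.apply_ne_top a) ((q a).apply_ne_top b)]
  simp only [ENNReal.toReal_mul]

theorem summable_toReal_mul_toReal (p : PMF α) (q : α → PMF β) (b : β) :
    Summable fun a => (p a).toReal * (q a b).toReal := by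
  simp only [← ENNReal.toReal_mul]
  exact ENNReal.summable_toReal (p.bind_apply q b ▸ (p.bind q).apply_ne_top b)

theorem expectation_bind {p : PMF α} {q : α → PMF β} {f : β → ℝ}
    (hf : Summable fun b => (p.bind q b).toReal * f b) :
    expectation (p.bind q) f = expectation p fun a => expectation (q a) f := by
  have hjoint : Summable fun x : β × α => (p x.2).toReal * (q x.2 x.1).toReal * f x.1 := by
    refine Summable.of_abs ((summable_prod_of_nonneg fun x => abs_nonneg _).2 ⟨fun b => ?_, ?_⟩)
    · exact ((summable_toReal_mul_toReal p q b).mul_right (f b)).abs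
    · simpa only [abs_mul, abs_of_nonneg ENNReal.toReal_nonneg, tsum_mul_right,
        ← toReal_bind_apply] using hf.abs
  calc expectation (p.bind q) f
      = ∑' b, ∑' a, (p a).toReal * (q a b).toReal * f b := by
        simp only [expectation, toReal_bind_apply, tsum_mul_right]
    _ = ∑' a, ∑' b, (p a).toReal * (q a b).toReal * f b := hjoint.tsum_comm.symm
    _ = expectation p fun a => expectation (q a) f := by
        simp only [expectation, mul_assoc, tsum_mul_left]

end Expectation

section SamplingHistory

variable {n : ℕ} (zP : List (Fin n) → PMF (Fin n))

theorem length_of_mem_support_sampleHist {t : ℕ} {h : List (Fin n)}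
    (hh : h ∈ (sampleHist n zP t).support) : h.length = t := by
  induction t generalizing h with
  | zero =>
    obtain rfl : h = [] := by simpa [sampleHist] using hh
    rfl
  | succ t ih =>
    simp only [sampleHist, PMF.mem_support_bind_iff, PMF.mem_support_pure_iff] at hh
    obtain ⟨g, hg, i, -, rfl⟩ := hh
    rw [List.length_cons, ih hg]

theorem summable_sampleHist_mul (t : ℕ) (f : List (Fin n) → ℝ) :
    Summable fun h => (sampleHist n zP t h).toReal * f h :=
  summable_toReal_mul_of_finite_support ((List.finite_length_eq (Fin n) t).subset
    fun _ => length_of_mem_support_sampleHist zP) f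

theorem expectation_sampleHist_succ (t : ℕ) (f : List (Fin n) → ℝ) :
    expectation (sampleHist n zP (t + 1)) f =
      expectation (sampleHist n zP t) fun h => ∑ i, (zP h i).toReal * f (i :: h) := by
  rw [sampleHist, expectation_bind (summable_sampleHist_mul zP (t + 1) f)]
  refine congrArg _ (funext fun h => ?_)
  have hfinite : ((zP h).bind fun i => PMF.pure (i :: h)).support.Finite := by
    rw [PMF.support_bind]
    exact (Set.toFinite _).biUnion fun i _ => by simp [PMF.support_pure]
  rw [expectation_bind (summable_toReal_mul_of_finite_support hfinite f), expectation_of_fintype]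
  simp only [expectation_pure]

theorem expectation_sampleHist_le_of_drift_le {T : ℕ} {Φ : List (Fin n) → ℝ} {c : ℝ}
    (hdrift : ∀ h : List (Fin n), h.length < T →
      ∑ i, (zP h i).toReal * Φ (i :: h) ≤ Φ h + c) :
    expectation (sampleHist n zP T) Φ ≤ Φ [] + T * c := by
  induction T with
  | zero => simp [sampleHist, expectation_pure]
  | succ T ih =>
    calc expectation (sampleHist n zP (T + 1)) Φ
        ≤ expectation (sampleHist n zP T) fun h => Φ h + c := by
          rw [expectation_sampleHist_succ]
          refine expectation_mono (summable_sampleHist_mul zP T _) (summable_sampleHist_mul zP T _)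
            fun h hh => hdrift h ?_
          rw [length_of_mem_support_sampleHist zP hh]
          exact T.lt_succ_self
      _ = expectation (sampleHist n zP T) Φ + c :=
          expectation_add_const (summable_sampleHist_mul zP T Φ) c
      _ ≤ Φ [] + T * c + c := by
          gcongr
          exact ih fun h hh => hdrift h (hh.trans T.lt_succ_self)
      _ = Φ [] + (T + 1 : ℕ) * c := by push_cast; ring

end SamplingHistory

section ExponentialUpdate

variable {ι : Type*} [Fintype ι] {η : ℝ} {w g : ι → ℝ}

theorem exp_neg_le_one_sub_add_sq_div_two {x : ℝ} (hx : 0 ≤ x) :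
    Real.exp (-x) ≤ 1 - x + x ^ 2 / 2 := by
  have hpos : 0 < 1 + x + x ^ 2 / 2 := by positivity
  rw [Real.exp_neg]
  calc (Real.exp x)⁻¹ ≤ (1 + x + x ^ 2 / 2)⁻¹ := inv_anti₀ hpos (Real.quadratic_le_exp_of_nonneg hx)
    _ ≤ 1 - x + x ^ 2 / 2 := by
      rw [inv_le_iff_one_le_mul₀ hpos]
      linear_combination (sq_nonneg (x ^ 2)) / 4

/-- The normalizer of the exponential-weights update of `w` by the loss vector `g`. -/
noncomputable def expPartition (η : ℝ) (w g : ι → ℝ) : ℝ :=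
  ∑ i, w i * Real.exp (-η * g i)

/-- One exponential-weights step: `w` reweighted by `exp (-η g)` and normalized. -/
noncomputable def expUpdate (η : ℝ) (w g : ι → ℝ) (i : ι) : ℝ :=
  w i * Real.exp (-η * g i) / expPartition η w g

theorem expPartition_pos (hw : w ∈ stdSimplex ℝ ι) : 0 < expPartition η w g := by
  obtain ⟨i, hi, hwi⟩ := Finset.exists_ne_zero_of_sum_ne_zero (hw.2.trans_ne one_ne_zero)
  exact Finset.sum_pos' (fun j _ => mul_nonneg (hw.1 j) (Real.exp_pos _).le)
    ⟨i, hi, mul_pos ((hw.1 i).lt_of_ne' hwi) (Real.exp_pos _)⟩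

theorem expUpdate_mem_stdSimplex (hw : w ∈ stdSimplex ℝ ι) :
    expUpdate η w g ∈ stdSimplex ℝ ι := by
  refine ⟨fun i =>
    div_nonneg (mul_nonneg (hw.1 i) (Real.exp_pos _).le) (expPartition_pos hw).le, ?_⟩
  simp only [expUpdate, ← Finset.sum_div]
  exact div_self (expPartition_pos hw).ne'

theorem expUpdate_pos (hw : w ∈ stdSimplex ℝ ι) {i : ι} (hi : 0 < w i) : 0 < expUpdate η w g i :=
  div_pos (mul_pos hi (Real.exp_pos _)) (expPartition_pos hw)

theorem log_expUpdate (hw : w ∈ stdSimplex ℝ ι) {i : ι} (hi : 0 < w i) :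
    Real.log (expUpdate η w g i) = Real.log (w i) - η * g i - Real.log (expPartition η w g) := by
  rw [expUpdate, Real.log_div (mul_pos hi (Real.exp_pos _)).ne' (expPartition_pos hw).ne',
    Real.log_mul hi.ne' (Real.exp_pos _).ne', Real.log_exp]
  ring

theorem log_expPartition_le (hη : 0 ≤ η) (hw : w ∈ stdSimplex ℝ ι) (hg : ∀ i, 0 ≤ g i) :
    Real.log (expPartition η w g) ≤
      -(η * ∑ i, g i * w i) + η ^ 2 / 2 * ∑ i, g i ^ 2 * w i := by
  have hquad : expPartition η w g ≤
      1 - η * ∑ i, g i * w i + η ^ 2 / 2 * ∑ i, g i ^ 2 * w i := by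
    calc expPartition η w g
        ≤ ∑ i, w i * (1 - η * g i + (η * g i) ^ 2 / 2) := by
          refine Finset.sum_le_sum fun i _ => mul_le_mul_of_nonneg_left ?_ (hw.1 i)
          rw [neg_mul]
          exact exp_neg_le_one_sub_add_sq_div_two (mul_nonneg hη (hg i))
      _ = ∑ i, w i - η * ∑ i, g i * w i + η ^ 2 / 2 * ∑ i, g i ^ 2 * w i := by
          simp only [Finset.mul_sum, ← Finset.sum_sub_distrib, ← Finset.sum_add_distrib]
          exact Finset.sum_congr rfl fun i _ => by ring
      _ = _ := by rw [hw.2]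
  linarith [Real.log_le_sub_one_of_pos (expPartition_pos (η := η) (g := g) hw)]

theorem neg_log_expUpdate_le (hη : 0 ≤ η) (hw : w ∈ stdSimplex ℝ ι) (hg : ∀ i, 0 ≤ g i) {a : ι}
    (ha : 0 < w a) :
    -Real.log (expUpdate η w g a) ≤
      -Real.log (w a) + η * (g a - ∑ i, g i * w i) + η ^ 2 / 2 * ∑ i, g i ^ 2 * w i := by
  rw [log_expUpdate hw ha]
  linarith [log_expPartition_le hη hw hg]

end ExponentialUpdate

section ImportanceWeighting

variable {ι : Type*} [DecidableEq ι] {ℓ w z : ι → ℝ} {C η : ℝ}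

/-- The importance-weighted estimate of the loss vector `ℓ` after the arm `i`, drawn from `z`, has
been observed. -/
noncomputable def importanceEstimate (ℓ z : ι → ℝ) (i : ι) : ι → ℝ :=
  fun j => if j = i then ℓ j / z j else 0

theorem importanceEstimate_nonneg (hℓ : ∀ j, 0 ≤ ℓ j) (hz : ∀ j, 0 ≤ z j) (i j : ι) :
    0 ≤ importanceEstimate ℓ z i j := by
  unfold importanceEstimate
  split_ifs
  · exact div_nonneg (hℓ j) (hz j)
  · exact le_rfl

variable [Fintype ι]

theorem sum_mul_importanceEstimate {j : ι} (hz : z j ≠ 0) :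
    ∑ i, z i * importanceEstimate ℓ z i j = ℓ j := by
  simp [importanceEstimate, mul_div_cancel₀ _ hz]

theorem sum_mul_importanceEstimate_sq (j : ι) :
    ∑ i, z i * importanceEstimate ℓ z i j ^ 2 = ℓ j ^ 2 / z j := by
  obtain hz | hz := eq_or_ne (z j) 0
  · simp [importanceEstimate, hz]
  · simp only [importanceEstimate, ite_pow, mul_ite, Finset.sum_ite_eq, Finset.mem_univ, if_true,
      zero_pow two_ne_zero, mul_zero]
    field_simp

theorem sum_mul_sum_importanceEstimate_mul (hz : ∀ j, z j ≠ 0) :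
    ∑ i, z i * ∑ j, importanceEstimate ℓ z i j * w j = ∑ j, ℓ j * w j := by
  simp only [Finset.mul_sum, ← mul_assoc]
  rw [Finset.sum_comm]
  simp only [← Finset.sum_mul, sum_mul_importanceEstimate (hz _)]

theorem sum_mul_sum_importanceEstimate_sq_mul_le (hℓ : ∀ j, |ℓ j| ≤ 1) (hw : ∀ j, 0 ≤ w j)
    (hz : ∀ j, 0 < z j) (hdom : ∀ j, w j ≤ C * z j) :
    ∑ i, z i * ∑ j, importanceEstimate ℓ z i j ^ 2 * w j ≤ C * Fintype.card ι := by
  calc ∑ i, z i * ∑ j, importanceEstimate ℓ z i j ^ 2 * w j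
      = ∑ j, ℓ j ^ 2 * (w j / z j) := by
        simp only [Finset.mul_sum, ← mul_assoc]
        rw [Finset.sum_comm]
        simp only [← Finset.sum_mul, sum_mul_importanceEstimate_sq, div_mul_eq_mul_div,
          mul_div_assoc]
    _ ≤ ∑ _j : ι, C := by
        refine Finset.sum_le_sum fun j _ => ?_
        have hsq : ℓ j ^ 2 ≤ 1 := (sq_le_one_iff_abs_le_one _).2 (hℓ j)
        exact (mul_le_of_le_one_left (div_nonneg (hw j) (hz j).le) hsq).trans
          ((div_le_iff₀ (hz j)).2 (hdom j))
    _ = C * Fintype.card ι := by simp [mul_comm]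

theorem sum_mul_neg_log_expUpdate_importanceEstimate_le (hη : 0 ≤ η)
    (hℓ : ∀ j, ℓ j ∈ Set.Icc (0 : ℝ) 1) (hw : w ∈ stdSimplex ℝ ι) (hz : ∀ j, 0 < z j)
    (hz_sum : ∑ j, z j = 1) (hdom : ∀ j, w j ≤ C * z j) {a : ι} (ha : 0 < w a) :
    ∑ i, z i * -Real.log (expUpdate η w (importanceEstimate ℓ z i) a) ≤
      -Real.log (w a) + η * (ℓ a - ∑ j, ℓ j * w j) + η ^ 2 / 2 * (C * Fintype.card ι) := by
  set est := importanceEstimate ℓ z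
  calc ∑ i, z i * -Real.log (expUpdate η w (est i) a)
      ≤ ∑ i, z i * (-Real.log (w a) + η * (est i a - ∑ j, est i j * w j)
          + η ^ 2 / 2 * ∑ j, est i j ^ 2 * w j) :=
        Finset.sum_le_sum fun i _ => mul_le_mul_of_nonneg_left
          (neg_log_expUpdate_le hη hw
            (importanceEstimate_nonneg (fun j => (hℓ j).1) (fun j => (hz j).le) i) ha) (hz i).le
    _ = (∑ i, z i) * -Real.log (w a)
          + η * (∑ i, z i * est i a - ∑ i, z i * ∑ j, est i j * w j)
          + η ^ 2 / 2 * ∑ i, z i * ∑ j, est i j ^ 2 * w j := by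
        rw [Finset.sum_mul, ← Finset.sum_sub_distrib, Finset.mul_sum, Finset.mul_sum,
          ← Finset.sum_add_distrib, ← Finset.sum_add_distrib]
        exact Finset.sum_congr rfl fun i _ => by ring
    _ ≤ -Real.log (w a) + η * (ℓ a - ∑ j, ℓ j * w j) + η ^ 2 / 2 * (C * Fintype.card ι) := by
        rw [hz_sum, one_mul, sum_mul_importanceEstimate (hz a).ne',
          sum_mul_sum_importanceEstimate_mul fun j => (hz j).ne']
        gcongr
        exact sum_mul_sum_importanceEstimate_sq_mul_le
          (fun j => abs_le.2 ⟨by linarith [(hℓ j).1], (hℓ j).2⟩) hw.1 hz hdom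

end ImportanceWeighting

section Regret

variable {n : ℕ} (ℓ : ℕ → Fin n → ℝ) (η : ℝ) (z : List (Fin n) → Fin n → ℝ)

theorem expWeights_cons (i : Fin n) (h : List (Fin n)) :
    expWeights n ℓ η z (i :: h) =
      expUpdate η (expWeights n ℓ η z h) (importanceEstimate (ℓ h.length) (z h) i) :=
  rfl

theorem expWeights_mem_stdSimplex [NeZero n] (h : List (Fin n)) :
    expWeights n ℓ η z h ∈ stdSimplex ℝ (Fin n) := by
  induction h with
  | nil => exact ⟨fun _ => by simp [expWeights], by simp [expWeights]⟩
  | cons i h ih => exact expUpdate_mem_stdSimplex ih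

theorem expWeights_pos (h : List (Fin n)) (a : Fin n) : 0 < expWeights n ℓ η z h a := by
  have : NeZero n := a.neZero
  induction h with
  | nil => simp [expWeights, this.pos]
  | cons i h ih =>
    rw [expWeights_cons]
    exact expUpdate_pos (expWeights_mem_stdSimplex ℓ η z h) ih

theorem log_expWeights_nonpos (h : List (Fin n)) (a : Fin n) :
    Real.log (expWeights n ℓ η z h a) ≤ 0 := by
  have : NeZero n := a.neZero
  have hw := expWeights_mem_stdSimplex ℓ η z h
  exact Real.log_nonpos (hw.1 a) (mem_Icc_of_mem_stdSimplex hw a).2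

/-- The regret against the arm `a` accumulated along the history `h`: the expected losses of the
weight vectors in use minus the losses of `a`. Since `h` lists the most recent index first, the
history before round `s` is its suffix of length `s`. -/
noncomputable def cumRegret (a : Fin n) (h : List (Fin n)) : ℝ :=
  ∑ s ∈ Finset.range h.length,
    ((∑ i, ℓ s i * expWeights n ℓ η z (h.drop (h.length - s)) i) - ℓ s a)

theorem cumRegret_cons (a i : Fin n) (h : List (Fin n)) :
    cumRegret ℓ η z a (i :: h) = cumRegret ℓ η z a h +
      ((∑ j, ℓ h.length j * expWeights n ℓ η z h j) - ℓ h.length a) := by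
  rw [cumRegret, List.length_cons, Finset.sum_range_succ]
  congr 1
  · refine Finset.sum_congr rfl fun s hs => ?_
    rw [Nat.succ_sub (Finset.mem_range.1 hs).le, List.drop_succ_cons]
  · simp

/-- The Lyapunov function of the analysis: scaled regret against `a` minus the log-weight of `a`. -/
noncomputable def regretPotential (a : Fin n) (h : List (Fin n)) : ℝ :=
  η * cumRegret ℓ η z a h - Real.log (expWeights n ℓ η z h a)

theorem regretPotential_nil (a : Fin n) : regretPotential ℓ η z a [] = Real.log n := by
  simp [regretPotential, cumRegret, expWeights]

theorem mul_cumRegret_le_regretPotential (a : Fin n) (h : List (Fin n)) :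
    η * cumRegret ℓ η z a h ≤ regretPotential ℓ η z a h :=
  (le_sub_self_iff _).2 (log_expWeights_nonpos ℓ η z h a)

variable {ℓ η z} {C : ℝ}

theorem sum_mul_regretPotential_cons_le (hη : 0 ≤ η) (hC : 0 ≤ C) {h : List (Fin n)}
    (hℓ : ∀ i, ℓ h.length i ∈ Set.Icc (0 : ℝ) 1) (hz_sum : ∑ i, z h i = 1)
    (hdom : ∀ i, expWeights n ℓ η z h i ≤ C * z h i) (a : Fin n) :
    ∑ i, z h i * regretPotential ℓ η z a (i :: h) ≤
      regretPotential ℓ η z a h + η ^ 2 / 2 * (C * n) := by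
  have : NeZero n := a.neZero
  have hw_pos := expWeights_pos ℓ η z h
  have hz_pos : ∀ i, 0 < z h i := fun i =>
    pos_of_mul_pos_right ((hw_pos i).trans_le (hdom i)) hC
  have hround := sum_mul_neg_log_expUpdate_importanceEstimate_le hη hℓ
    (expWeights_mem_stdSimplex ℓ η z h) hz_pos hz_sum hdom (hw_pos a)
  simp only [← expWeights_cons, Fintype.card_fin] at hround
  simp only [regretPotential, cumRegret_cons, sub_eq_add_neg (η * _), mul_add (z h _),
    Finset.sum_add_distrib, ← Finset.sum_mul, hz_sum]
  linarith

variable {T : ℕ} {zP : List (Fin n) → PMF (Fin n)}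

theorem expectation_cumRegret_le (hη : 0 < η) (hC : 0 ≤ C)
    (hℓ : ∀ t i, ℓ t i ∈ Set.Icc (0 : ℝ) 1) (hz : ∀ h i, z h i = (zP h i).toReal)
    (hdom : ∀ h : List (Fin n), h.length < T → ∀ i, expWeights n ℓ η z h i ≤ C * z h i)
    (a : Fin n) :
    expectation (sampleHist n zP T) (cumRegret ℓ η z a) ≤
      Real.log n / η + η * (T * n * C) / 2 := by
  have hz_sum (h : List (Fin n)) : ∑ i, z h i = 1 := by
    simpa [expectation_of_fintype, hz] using expectation_const (zP h) 1
  have hpotential : η * expectation (sampleHist n zP T) (cumRegret ℓ η z a) ≤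
      Real.log n + T * (η ^ 2 / 2 * (C * n)) := by
    calc η * expectation (sampleHist n zP T) (cumRegret ℓ η z a)
        ≤ expectation (sampleHist n zP T) (regretPotential ℓ η z a) := by
          rw [← expectation_const_mul]
          exact expectation_mono (summable_sampleHist_mul zP T _) (summable_sampleHist_mul zP T _)
            fun h _ => mul_cumRegret_le_regretPotential ℓ η z a h
      _ ≤ regretPotential ℓ η z a [] + T * (η ^ 2 / 2 * (C * n)) := by
          refine expectation_sampleHist_le_of_drift_le zP fun h hh => ?_
          simpa only [hz] using
            sum_mul_regretPotential_cons_le hη.le hC (hℓ h.length) (hz_sum h) (hdom h hh) a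
      _ = Real.log n + T * (η ^ 2 / 2 * (C * n)) := by rw [regretPotential_nil]
  rw [← mul_le_mul_iff_right₀ hη]
  refine hpotential.trans_eq ?_
  field_simp

variable (ℓ η z T zP) in
theorem expectation_cumRegret_eq (a : Fin n) :
    expectation (sampleHist n zP T) (cumRegret ℓ η z a) =
      expectation (sampleHist n zP T) (fun h =>
        ∑ t ∈ Finset.range T, ∑ i, ℓ t i * expWeights n ℓ η z (h.drop (T - t)) i)
      - ∑ t ∈ Finset.range T, ℓ t a := by
  rw [sub_eq_add_neg, ← expectation_add_const (summable_sampleHist_mul zP T _)]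
  refine expectation_congr fun h hh => ?_
  rw [cumRegret, length_of_mem_support_sampleHist zP hh, Finset.sum_sub_distrib, sub_eq_add_neg]

end Regret

theorem div_sqrt_div_add_sqrt_div_mul {L A : ℝ} (hL : 0 ≤ L) (hA : 0 ≤ A) :
    L / √(L / A) + √(L / A) * A / 2 = 3 / 2 * √(A * L) := by
  have hquotient : L / √(L / A) = √(A * L) := by
    rw [Real.sqrt_div hL, div_div_eq_mul_div, mul_div_right_comm, Real.div_sqrt, mul_comm,
      Real.sqrt_mul hA]
  have hproduct : √(L / A) * A = √(A * L) := by
    rw [Real.sqrt_div hL, div_mul_eq_mul_div, mul_div_assoc, Real.div_sqrt, mul_comm,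
      Real.sqrt_mul hA]
  rw [hquotient, hproduct]
  ring

/-- Regret of exponential weights (EXP3-type) with a general
importance-weighted loss estimator.  If at every round the sampling distribution `z`
dominates the current weights, `w t i ≤ C * z t i`, and
`η = √(log n / (T n C))`, then the expected regret against any fixed arm `i*` is at most
`2 √(C n T log n)`. -/
theorem exp3_general_estimator_regret (n T : ℕ) (C : ℝ)
    (hn : 2 ≤ n) (hT : 1 ≤ T) (hC : 1 ≤ C)
    (ℓ : ℕ → Fin n → ℝ) (hℓ : ∀ t i, ℓ t i ∈ Set.Icc (0 : ℝ) 1)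
    (zP : List (Fin n) → PMF (Fin n)) (z : List (Fin n) → Fin n → ℝ)
    (hz : ∀ h i, z h i = (zP h i).toReal)
    (η : ℝ) (hη : η = Real.sqrt (Real.log n / (T * n * C)))
    (hdom : ∀ h : List (Fin n), h.length < T → ∀ i,
      expWeights n ℓ η z h i ≤ C * z h i)
    (istar : Fin n) :
    (∑' h : List (Fin n), (sampleHist n zP T h).toReal *
        ∑ t ∈ Finset.range T, ∑ i, ℓ t i * expWeights n ℓ η z (h.drop (T - t)) i)
      - ∑ t ∈ Finset.range T, ℓ t istar
      ≤ 2 * Real.sqrt (C * n * T * Real.log n) := by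
  have hlog : 0 < Real.log n := Real.log_pos (by exact_mod_cast hn)
  have hη_pos : 0 < η := by rw [hη]; positivity
  have hregret := expectation_cumRegret_le hη_pos (zero_le_one.trans hC) hℓ hz hdom istar
  rw [expectation_cumRegret_eq] at hregret
  calc _ ≤ Real.log n / η + η * (T * n * C) / 2 := hregret
    _ = 3 / 2 * √(T * n * C * Real.log n) := by
        rw [hη, div_sqrt_div_add_sqrt_div_mul hlog.le (by positivity)]
    _ = 3 / 2 * √(C * n * T * Real.log n) := by ring_nf
    _ ≤ 2 * √(C * n * T * Real.log n) := by gcongr; norm_num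
end

section
/- Let B ≥ 1 and fix nonnegative step sizes η_1,…,η_B. Let pseudo-weights w̃_t(k) ≥ 0 for t = 1,…,T and k ∈ [B] evolve as follows: w̃_{t+1}(k) = 1 whenever k is 'reset' at time t+1, and w̃_{t+1}(k) = w̃_t(k)·(1 + η_k·r_t(k)) otherwise, for some real numbers r_t(k). Assume: (i) Σ_k w̃_1(k) ≤ 1; (ii) for every t, all factors satisfy 1 + η_k·r_t(k) ≥ 0; (iii) for every t, Σ_{k=1}^B η_k·w̃_t(k)·r_t(k) ≤ 0; (iv) for every t, the number of indices reset at time t+1 is at most log₂(t+1) + 1. Then for every t ∈ [T], Σ_{k=1}^B w̃_t(k) ≤ t·(log₂ t + 1). -/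
/-!
The total pseudo-weight is a potential. A multiplicative update does not increase it, by the
weighted nonpositivity of the gains, and resetting an index to `1` discards a nonnegative weight,
so it adds at most `1`. Hence the increase at time `t + 1` is at most the number of resets at that
time, and since the bound on this number is monotone, after `t` rounds the potential is at most
`t` times the latest bound.
-/

section OrderedSemiring

variable {ι R : Type*} [Semiring R] [PartialOrder R] [IsOrderedRing R]

theorem sum_mul_one_add_le [Fintype ι] {u g : ι → R} (h : ∑ k, u k * g k ≤ 0) :
    ∑ k, u k * (1 + g k) ≤ ∑ k, u k := by
  simpa only [mul_one_add, Finset.sum_add_distrib] using add_le_of_nonpos_right h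

theorem sum_le_sum_add_card_of_reset [Fintype ι] {S : Finset ι} {u v : ι → R}
    (hu : ∀ k ∈ S, 0 ≤ u k) (hreset : ∀ k ∈ S, v k = 1) (hkeep : ∀ k ∉ S, v k = u k) :
    ∑ k, v k ≤ ∑ k, u k + (S.card : R) := by
  classical
  have hterm (k : ι) : v k ≤ u k + if k ∈ S then 1 else 0 := by
    by_cases hk : k ∈ S
    · simpa only [hreset k hk, if_pos hk] using le_add_of_nonneg_left (hu k hk)
    · simp only [hkeep k hk, if_neg hk, add_zero, le_refl]
  calc ∑ k, v k ≤ ∑ k, (u k + if k ∈ S then 1 else 0) := Finset.sum_le_sum fun k _ => hterm k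
    _ = ∑ k, u k + (S.card : R) := by simp [Finset.sum_add_distrib]

theorem le_natCast_mul_of_le_add_of_monotoneOn {Φ b : ℕ → R} {T : ℕ} (hT : 1 ≤ T)
    (hb : MonotoneOn b (Set.Icc 1 T)) (hinit : Φ 1 ≤ b 1)
    (hstep : ∀ t, 1 ≤ t → t < T → Φ (t + 1) ≤ Φ t + b (t + 1)) :
    Φ T ≤ T * b T := by
  suffices h : ∀ t, 1 ≤ t → t ≤ T → Φ t ≤ t * b t from h T hT le_rfl
  intro t ht
  induction t, ht using Nat.le_induction with
  | base => exact fun _ => by simpa using hinit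
  | succ t ht ih =>
    intro htT
    have hbt : b t ≤ b (t + 1) := hb ⟨ht, by omega⟩ ⟨by omega, htT⟩ t.le_succ
    calc Φ (t + 1) ≤ Φ t + b (t + 1) := hstep t ht htT
      _ ≤ t * b t + b (t + 1) := by gcongr; exact ih (by omega)
      _ ≤ t * b (t + 1) + b (t + 1) := by gcongr
      _ = ↑(t + 1) * b (t + 1) := by rw [Nat.cast_succ, add_one_mul]

theorem pseudo_weight_potential_bound_general [Fintype ι] {T : ℕ} (hT : 1 ≤ T)
    {w g : ℕ → ι → R} {reset : ℕ → Finset ι} {b : ℕ → R} (hb : MonotoneOn b (Set.Icc 1 T))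
    (hupd : ∀ t, 1 ≤ t → t < T → ∀ k,
      (k ∈ reset (t + 1) → w (t + 1) k = 1) ∧
      (k ∉ reset (t + 1) → w (t + 1) k = w t k * (1 + g t k)))
    (hinit : ∑ k, w 1 k ≤ b 1)
    (hdiscard : ∀ t, 1 ≤ t → t < T → ∀ k ∈ reset (t + 1), 0 ≤ w t k * (1 + g t k))
    (hgain : ∀ t, 1 ≤ t → t < T → ∑ k, w t k * g t k ≤ 0)
    (hreset : ∀ t, 1 ≤ t → t < T → ((reset (t + 1)).card : R) ≤ b (t + 1)) :
    ∑ k, w T k ≤ T * b T := by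
  refine le_natCast_mul_of_le_add_of_monotoneOn (Φ := fun t => ∑ k, w t k) hT hb hinit ?_
  intro t ht htT
  calc ∑ k, w (t + 1) k
      ≤ ∑ k, w t k * (1 + g t k) + ((reset (t + 1)).card : R) :=
        sum_le_sum_add_card_of_reset (hdiscard t ht htT)
          (fun k => (hupd t ht htT k).1) (fun k => (hupd t ht htT k).2)
    _ ≤ ∑ k, w t k + b (t + 1) :=
        add_le_add (sum_mul_one_add_le (hgain t ht htT)) (hreset t ht htT)

end OrderedSemiring

theorem monotoneOn_logb_natCast {a : ℝ} (ha : 1 < a) :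
    MonotoneOn (fun n : ℕ => Real.logb a n) (Set.Ici 1) := fun _ hm _ _ hmn =>
  Real.logb_le_logb_of_le ha (Nat.cast_pos.2 hm) (Nat.cast_le.2 hmn)

/-- Potential-function bound for the StABL meta-algorithm.
Pseudo-weights `w̃ t k ≥ 0` are reset to `1` at reset times and otherwise updated
multiplicatively by `1 + η k * r t k`.  Under the stated conditions, for every
`1 ≤ t ≤ T` the total pseudo-weight satisfies `∑ k, w̃ t k ≤ t (log₂ t + 1)`. -/
theorem pseudo_weight_potential_bound {B : ℕ} (hB : 1 ≤ B) (T : ℕ)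
    (η : Fin B → ℝ) (hη : ∀ k, 0 ≤ η k)
    (w : ℕ → Fin B → ℝ) (r : ℕ → Fin B → ℝ) (reset : ℕ → Finset (Fin B))
    (hw_nonneg : ∀ t k, 0 ≤ w t k)
    (hupd : ∀ t, 1 ≤ t → ∀ k : Fin B,
      (k ∈ reset (t + 1) → w (t + 1) k = 1) ∧
      (k ∉ reset (t + 1) → w (t + 1) k = w t k * (1 + η k * r t k)))
    (hinit : ∑ k, w 1 k ≤ 1)
    (hfac : ∀ t, 1 ≤ t → ∀ k, 0 ≤ 1 + η k * r t k)
    (hzero : ∀ t, 1 ≤ t → ∑ k, η k * w t k * r t k ≤ 0)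
    (hreset : ∀ t, 1 ≤ t → ((reset (t + 1)).card : ℝ) ≤ Real.logb 2 (t + 1) + 1) :
    ∀ t, 1 ≤ t → t ≤ T → ∑ k, w t k ≤ t * (Real.logb 2 t + 1) := by
  intro t ht _
  have hb : MonotoneOn (fun n : ℕ => Real.logb 2 n + 1) (Set.Icc 1 t) :=
    ((monotoneOn_logb_natCast one_lt_two).mono Set.Icc_subset_Ici_self).add_const 1
  exact pseudo_weight_potential_bound_general (g := fun s k => η k * r s k) ht hb
    (fun s hs _ => hupd s hs)
    (by simpa using hinit)
    (fun s hs _ k _ => mul_nonneg (hw_nonneg s k) (hfac s hs k))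
    (fun s hs _ => by simpa only [mul_assoc, mul_left_comm] using hzero s hs)
    (fun s hs _ => by simpa using hreset s hs)
end

section
/- For any integers 1 ≤ j ≤ s, the set of integers {j, j+1, …, s} can be partitioned into at most 2·(⌊log₂(s − j + 1)⌋ + 1) pairwise disjoint consecutive blocks, each of which has the form {q·2^k, q·2^k + 1, …, (q+1)·2^k − 1} for some integers k ≥ 0 and q ≥ 1. -/
/-!
From `{a, …, b − 1}` remove `a` if `a` is odd and `b − 1` if `b` is odd. What remains is the
preimage under `x ↦ x / 2` of an interval of at most half the length, and a geometric interval pulls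
back under this map to one of twice the length with the same `q`. Each halving thus costs at most
two blocks. When `a ≥ 1`, no block has `q = 0`, since such a block contains `0`.
-/

open Finset

/-- The geometric interval `{q·2^k, …, (q+1)·2^k − 1}`, indexed by `p = (k, q)`; the index `q = 0`
is allowed. -/
def geometricInterval (p : ℕ × ℕ) : Finset ℕ :=
  Ico (p.2 * 2 ^ p.1) ((p.2 + 1) * 2 ^ p.1)

theorem mem_geometricInterval {p : ℕ × ℕ} {x : ℕ} :
    x ∈ geometricInterval p ↔ x / 2 ^ p.1 = p.2 := by
  have two_pow_pos : 0 < 2 ^ p.1 := Nat.two_pow_pos p.1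
  rw [geometricInterval, mem_Ico, ← Nat.le_div_iff_mul_le two_pow_pos,
    ← Nat.div_lt_iff_lt_mul two_pow_pos, Nat.lt_succ_iff, ← le_antisymm_iff, eq_comm]

theorem mem_geometricInterval_succ {k q x : ℕ} :
    x ∈ geometricInterval (k + 1, q) ↔ x / 2 ∈ geometricInterval (k, q) := by
  simp only [mem_geometricInterval, Nat.div_div_eq_div_mul, pow_succ']

theorem zero_mem_geometricInterval {p : ℕ × ℕ} : 0 ∈ geometricInterval p ↔ p.2 = 0 := by
  rw [mem_geometricInterval, Nat.zero_div, eq_comm]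

theorem geometricInterval_zero (x : ℕ) : geometricInterval (0, x) = {x} := by
  ext y
  simp [mem_geometricInterval]

/-- `S` is the disjoint union of at most `n` geometric intervals, given by a finset of indices. -/
def HasGeometricPartition (S : Finset ℕ) (n : ℕ) : Prop :=
  ∃ P : Finset (ℕ × ℕ),
    (P : Set (ℕ × ℕ)).PairwiseDisjoint geometricInterval ∧
    P.biUnion geometricInterval = S ∧ #P ≤ n

namespace HasGeometricPartition

variable {S T : Finset ℕ} {a b c m n : ℕ}

theorem of_card_le (h : #S ≤ n) : HasGeometricPartition S n := by
  refine ⟨S.image (Prod.mk 0), ?_, ?_, card_image_le.trans h⟩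
  · rw [coe_image]
    rintro _ ⟨x, -, rfl⟩ _ ⟨y, -, rfl⟩ hxy
    simpa [Function.onFun, geometricInterval_zero] using hxy
  · simp only [image_biUnion, geometricInterval_zero, biUnion_singleton_eq_self]

theorem union (hS : HasGeometricPartition S m) (hT : HasGeometricPartition T n)
    (hST : Disjoint S T) : HasGeometricPartition (S ∪ T) (m + n) := by
  obtain ⟨P, P_disjoint, rfl, P_card⟩ := hS
  obtain ⟨Q, Q_disjoint, rfl, Q_card⟩ := hT
  refine ⟨P ∪ Q, ?_, union_biUnion, (card_union_le P Q).trans (add_le_add P_card Q_card)⟩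
  rw [coe_union, Set.pairwiseDisjoint_union]
  exact ⟨P_disjoint, Q_disjoint, fun p hp q hq _ =>
    hST.mono (subset_biUnion_of_mem _ hp) (subset_biUnion_of_mem _ hq)⟩

theorem Ico_append (hab : a ≤ b) (hbc : b ≤ c) (h₁ : HasGeometricPartition (Ico a b) m)
    (h₂ : HasGeometricPartition (Ico b c) n) : HasGeometricPartition (Ico a c) (m + n) := by
  rw [← Ico_union_Ico_eq_Ico hab hbc]
  exact h₁.union h₂ (Ico_disjoint_Ico_consecutive a b c)

theorem of_mem_iff_div_two_mem (hS : HasGeometricPartition S n)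
    (hT : ∀ x, x ∈ T ↔ x / 2 ∈ S) : HasGeometricPartition T n := by
  obtain ⟨P, P_disjoint, rfl, P_card⟩ := hS
  refine ⟨P.image (Prod.map Nat.succ id), ?_, ?_, card_image_le.trans P_card⟩
  · rw [coe_image]
    rintro _ ⟨p, hp, rfl⟩ _ ⟨q, hq, rfl⟩ hpq
    have hpq_disjoint := P_disjoint hp hq (ne_of_apply_ne _ hpq)
    exact disjoint_left.2 fun x hxp hxq => disjoint_left.1 hpq_disjoint
      (mem_geometricInterval_succ.1 hxp) (mem_geometricInterval_succ.1 hxq)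
  · ext x
    simp only [hT, image_biUnion, mem_biUnion, Prod.map, id, Nat.succ_eq_add_one,
      mem_geometricInterval_succ]

theorem Ico_two_mul (h : HasGeometricPartition (Ico a b) n) :
    HasGeometricPartition (Ico (2 * a) (2 * b)) n :=
  h.of_mem_iff_div_two_mem fun x => by simp only [mem_Ico]; omega

theorem Ico_of_sub_lt_two_pow {t : ℕ} (h : b - a < 2 ^ t) :
    HasGeometricPartition (Ico a b) (2 * t) := by
  induction t generalizing a b with
  | zero => exact of_card_le (by rw [Nat.card_Ico]; omega)
  | succ t ih =>
    obtain hba | hab := le_or_gt b a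
    · exact of_card_le (by rw [Nat.card_Ico]; omega)
    have left : HasGeometricPartition (Ico a (2 * ((a + 1) / 2))) 1 :=
      of_card_le (by rw [Nat.card_Ico]; omega)
    have middle : HasGeometricPartition (Ico (2 * ((a + 1) / 2)) (2 * (b / 2))) (2 * t) :=
      (ih (by rw [pow_succ] at h; omega)).Ico_two_mul
    have right : HasGeometricPartition (Ico (2 * (b / 2)) b) 1 :=
      of_card_le (by rw [Nat.card_Ico]; omega)
    have whole : HasGeometricPartition (Ico a b) (1 + 2 * t + 1) :=
      (left.Ico_append (by omega) (by omega) middle).Ico_append (by omega) (by omega) right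
    rwa [show 1 + 2 * t + 1 = 2 * (t + 1) by ring] at whole

end HasGeometricPartition

/-- Dyadic decomposition of intervals (Daniely et al.).
For integers `1 ≤ j ≤ s`, the set `{j, …, s}` can be partitioned into at most
`2 (⌊log₂ (s − j + 1)⌋ + 1)` pairwise disjoint consecutive blocks, each of the form
`{q·2^k, …, (q+1)·2^k − 1}` with `k ≥ 0` and `q ≥ 1`. -/
theorem geometric_interval_decomposition (j s : ℕ) (hj : 1 ≤ j) (hjs : j ≤ s) :
    ∃ P : Finset (ℕ × ℕ),
      (∀ p ∈ P, 1 ≤ p.2) ∧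
      (P : Set (ℕ × ℕ)).PairwiseDisjoint
        (fun p => Finset.Ico (p.2 * 2 ^ p.1) ((p.2 + 1) * 2 ^ p.1)) ∧
      Finset.Icc j s = P.biUnion (fun p => Finset.Ico (p.2 * 2 ^ p.1) ((p.2 + 1) * 2 ^ p.1)) ∧
      P.card ≤ 2 * (Nat.log 2 (s - j + 1) + 1) := by
  have length_lt : s + 1 - j < 2 ^ (Nat.log 2 (s - j + 1) + 1) := by
    rw [Nat.sub_add_comm hjs]
    exact Nat.lt_pow_succ_log_self one_lt_two _
  obtain ⟨P, P_disjoint, P_biUnion, P_card⟩ :=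
    HasGeometricPartition.Ico_of_sub_lt_two_pow length_lt
  rw [Ico_add_one_right_eq_Icc] at P_biUnion
  refine ⟨P, fun p hp => Nat.one_le_iff_ne_zero.2 fun hq => ?_, P_disjoint, P_biUnion.symm, P_card⟩
  have zero_mem : 0 ∈ Icc j s :=
    P_biUnion ▸ mem_biUnion.2 ⟨p, hp, zero_mem_geometricInterval.2 hq⟩
  exact (hj.trans (mem_Icc.1 zero_mem).1).not_gt zero_lt_one
end

section
/- Let f : ℝ^d → ℝ be Lipschitz (d ≥ 1), let δ > 0, and define the ball-smoothed function f̂(x) = E_{v ∼ Unif(𝔹^d)}[f(x + δ·v)], where Unif(𝔹^d) is the uniform probability measure on the closed unit Euclidean ball. Then f̂ is differentiable and for every x ∈ ℝ^d, ∇f̂(x) = (d/δ) · E_{u ∼ Unif(S^{d−1})}[f(x + δ·u)·u], where Unif(S^{d−1}) is the uniform probability measure on the unit Euclidean sphere. -/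
open MeasureTheory

/-- The uniform probability measure on the closed unit Euclidean ball in `ℝ^d`. -/
noncomputable def uniformUnitBall (d : ℕ) : Measure (EuclideanSpace ℝ (Fin d)) :=
  (volume (Metric.closedBall (0 : EuclideanSpace ℝ (Fin d)) 1))⁻¹ •
    volume.restrict (Metric.closedBall (0 : EuclideanSpace ℝ (Fin d)) 1)

/-- The uniform probability measure on the unit Euclidean sphere in `ℝ^d`,
i.e. the normalized `(d−1)`-dimensional Hausdorff measure on the sphere. -/
noncomputable def uniformUnitSphere (d : ℕ) : Measure (EuclideanSpace ℝ (Fin d)) :=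
  ((μH[(d : ℝ) - 1] : Measure (EuclideanSpace ℝ (Fin d)))
      (Metric.sphere (0 : EuclideanSpace ℝ (Fin d)) 1))⁻¹ •
    (μH[(d : ℝ) - 1] : Measure (EuclideanSpace ℝ (Fin d))).restrict
      (Metric.sphere (0 : EuclideanSpace ℝ (Fin d)) 1)

/-!
Write `G(R, y)` for the integral of `f (y + v)` over the ball `‖v‖ < R`. The Epanechnikov kernel
`K_R(v) = max ((R² - ‖v‖²) / 2) 0` has `R`-derivative `R 1_{‖v‖ < R}` and `v`-gradient
`-1_{‖v‖ < R} v`, so `Ψ(R, y) = ∫ f(w) K_R(w - y) dw` satisfies `∂_R Ψ = R G` and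
`∇_y Ψ = ∫_{‖v‖ < R} f(y + v) v dv`; both derivatives fall on the kernel
rather than on `f`. In polar coordinates `∂_R ∇_y Ψ` is an integral of `f(y + R u) R u` over the
unit sphere, and exchanging the mixed partials yields `∇_y G`.

A finite rotation-invariant measure on the unit sphere is unique up to scaling, which identifies
the surface measure of polar coordinates with the normalized Hausdorff measure.
-/

open Filter Metric Module Set Topology
open scoped ENNReal NNReal Pointwise RealInnerProductSpace

section RotationInvariance

variable {E : Type*} [NormedAddCommGroup E] [InnerProductSpace ℝ E] [MeasurableSpace E]

/-- A measure on a Euclidean space is rotation invariant if every linear isometry preserves it.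
Reflections are included. -/
def IsRotationInvariant (μ : Measure E) : Prop :=
  ∀ φ : E ≃ₗᵢ[ℝ] E, MeasurePreserving φ μ μ

variable {μ ν : Measure E}

lemma IsRotationInvariant.smul (hμ : IsRotationInvariant μ) (c : ℝ≥0∞) :
    IsRotationInvariant (c • μ) :=
  fun φ ↦ (hμ φ).smul_measure c

variable [BorelSpace E]

lemma IsRotationInvariant.restrict_sphere (hμ : IsRotationInvariant μ) (r : ℝ) :
    IsRotationInvariant (μ.restrict (sphere 0 r)) := fun φ ↦ by
  simpa using (hμ φ).restrict_preimage (isClosed_sphere (x := 0) (ε := r)).measurableSet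

lemma IsRotationInvariant.charFun_eq_of_norm_eq (hμ : IsRotationInvariant μ) {s t : E}
    (h : ‖s‖ = ‖t‖) : charFun μ s = charFun μ t := by
  set φ : E ≃ₗᵢ[ℝ] E := (ℝ ∙ (s - t))ᗮ.reflection
  have hst : φ s = t := Submodule.reflection_sub h
  rw [charFun_apply, charFun_apply, ← hst,
    ← (hμ φ).integral_comp φ.toHomeomorph.measurableEmbedding
      (fun x ↦ Complex.exp (⟪x, φ s⟫ * _))]
  simp only [LinearIsometryEquiv.inner_map_map]

lemma IsRotationInvariant.measureReal_univ_mul_charFun (hμ : IsRotationInvariant μ)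
    (hν : ∀ᵐ u ∂ν, ‖u‖ = 1) (t : E) :
    ν.real univ * charFun μ t = ∫ u, charFun μ (‖t‖ • u) ∂ν := by
  have hradial : ∀ᵐ u ∂ν, charFun μ (‖t‖ • u) = charFun μ t := hν.mono fun u hu ↦
    hμ.charFun_eq_of_norm_eq (by simp [norm_smul, hu])
  rw [integral_congr_ae hradial, integral_const, Complex.real_smul]

/-- Both sides have characteristic function `t ↦ ∫ u, ∫ v, exp (i ‖t‖ ⟪u, v⟫) ∂μ ∂ν`. -/
theorem IsRotationInvariant.measure_univ_smul_eq [CompleteSpace E] [SecondCountableTopology E]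
    [IsFiniteMeasure μ] [IsFiniteMeasure ν]
    (hμ : IsRotationInvariant μ) (hν : IsRotationInvariant ν)
    (hμ_sphere : ∀ᵐ u ∂μ, ‖u‖ = 1) (hν_sphere : ∀ᵐ u ∂ν, ‖u‖ = 1) :
    ν univ • μ = μ univ • ν := by
  have := μ.smul_finite (measure_ne_top ν univ)
  have := ν.smul_finite (measure_ne_top μ univ)
  refine Measure.ext_of_charFun (funext fun t ↦ ?_)
  have hswap : ∫ u, charFun μ (‖t‖ • u) ∂ν = ∫ v, charFun ν (‖t‖ • v) ∂μ := by
    simp only [charFun_apply]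
    rw [integral_integral_swap]
    · simp only [inner_smul_right, real_inner_comm]
    · refine Integrable.of_bound (C := 1) (Continuous.aestronglyMeasurable ?_)
        (ae_of_all _ fun p ↦ by simp [Function.uncurry, Complex.norm_exp])
      unfold Function.uncurry
      fun_prop
  rw [← hμ.measureReal_univ_mul_charFun hν_sphere,
    ← hν.measureReal_univ_mul_charFun hμ_sphere] at hswap
  simpa only [charFun_apply, integral_smul_measure, Complex.real_smul,
    ← measureReal_def] using hswap

lemma isRotationInvariant_hausdorffMeasure (s : ℝ) :
    IsRotationInvariant (μH[s] : Measure E) :=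
  fun φ ↦ φ.toIsometryEquiv.measurePreserving_hausdorffMeasure s

lemma IsRotationInvariant.map_toSphere (hμ : IsRotationInvariant μ) :
    IsRotationInvariant (μ.toSphere.map Subtype.val) := fun φ ↦ by
  refine ⟨φ.continuous.measurable, Measure.ext fun s hs ↦ ?_⟩
  have hcone (A : Set E) (hA : MeasurableSet A) : μ.toSphere.map Subtype.val A =
      finrank ℝ E * μ (Ioo (0 : ℝ) 1 • (sphere 0 1 ∩ A)) := by
    rw [Measure.map_apply measurable_subtype_coe hA,
      μ.toSphere_apply' (measurable_subtype_coe hA), Subtype.image_preimage_coe]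
  have hpreimage : φ ⁻¹' (Ioo (0 : ℝ) 1 • (sphere 0 1 ∩ s)) =
      Ioo (0 : ℝ) 1 • (sphere 0 1 ∩ φ ⁻¹' s) := by
    ext x
    simp only [mem_preimage, Set.mem_smul, mem_inter_iff]
    constructor
    · rintro ⟨r, hr, u, ⟨hu, hus⟩, hx⟩
      exact ⟨r, hr, φ.symm u, ⟨by simpa using hu, by simpa using hus⟩, by
        simp [← map_smul, hx]⟩
    · rintro ⟨r, hr, u, ⟨hu, hus⟩, rfl⟩
      exact ⟨r, hr, φ u, ⟨by simpa using hu, hus⟩, (map_smul φ r u).symm⟩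
  rw [Measure.map_apply φ.continuous.measurable hs, hcone s hs,
    hcone _ (φ.continuous.measurable hs), ← hpreimage,
    (hμ φ).measure_preimage_emb φ.toHomeomorph.measurableEmbedding]

end RotationInvariance

section SphereHausdorff

variable {E : Type*} [NormedAddCommGroup E] [InnerProductSpace ℝ E] [FiniteDimensional ℝ E]

lemma finrank_orthogonal_span_singleton_eq_sub_one {v : E} (hv : v ≠ 0) :
    (finrank ℝ (ℝ ∙ v)ᗮ : ℝ) = finrank ℝ E - 1 := by
  rw [← (ℝ ∙ v).finrank_add_finrank_orthogonal, finrank_span_singleton hv]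
  simp

variable [MeasurableSpace E] [BorelSpace E]

/-- The orthogonal projection onto a hyperplane maps the sphere onto a solid ball. -/
lemma hausdorffMeasure_sphere_ne_zero [Nontrivial E] :
    (μH[finrank ℝ E - 1] : Measure E) (sphere 0 1) ≠ 0 := by
  obtain ⟨v, hv⟩ := exists_norm_eq E zero_le_one
  have hv0 : v ≠ 0 := norm_ne_zero_iff.1 (hv ▸ one_ne_zero)
  rw [← finrank_orthogonal_span_singleton_eq_sub_one hv0]
  set W := (ℝ ∙ v)ᗮ
  have hW (w : W) : ⟪(w : E), v⟫ = 0 := Submodule.mem_orthogonal_singleton_iff_inner_left.1 w.2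
  have hball_subset : ball 0 1 ⊆ W.orthogonalProjectionOnto '' sphere 0 1 := by
    intro w hw
    have hw : ‖w‖ ^ 2 ≤ 1 := by
      rw [mem_ball_zero_iff] at hw
      exact pow_le_one₀ (norm_nonneg w) hw.le
    refine ⟨w + √(1 - ‖w‖ ^ 2) • v, ?_, ?_⟩
    · rw [mem_sphere_zero_iff_norm, ← sq_eq_sq₀ (norm_nonneg _) zero_le_one,
        norm_add_sq_real, inner_smul_right, hW, norm_smul, mul_pow, hv, Real.norm_eq_abs, sq_abs,
        Real.sq_sqrt (sub_nonneg.2 hw)]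
      simp
    · have : W.orthogonalProjectionOnto v = 0 :=
        Submodule.orthogonalProjectionOnto_orthogonal_apply_eq_zero
          (Submodule.mem_span_singleton_self v)
      simp [this]
  have hpos : 0 < (μH[finrank ℝ W] : Measure W) (W.orthogonalProjectionOnto '' sphere 0 1) :=
    (measure_ball_pos _ _ one_pos).trans_le (measure_mono hball_subset)
  have hle := W.lipschitzWith_orthogonalProjectionOnto.hausdorffMeasure_image_le
    (Nat.cast_nonneg (finrank ℝ W)) (sphere 0 1)
  simpa using hpos.trans_le hle |>.ne'

/-- Stereographic projection from the antipode covers a neighbourhood of a point by the Lipschitz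
image of a bounded subset of a hyperplane. -/
lemma hausdorffMeasure_sphere_lt_top :
    (μH[finrank ℝ E - 1] : Measure E) (sphere 0 1) < ∞ := by
  refine (isCompact_sphere 0 1).measure_lt_top_of_nhdsWithin fun u hu ↦ ?_
  have hv : ‖-u‖ = 1 := by simpa using hu
  have hv0 : -u ≠ 0 := norm_ne_zero_iff.1 (hv ▸ one_ne_zero)
  rw [← finrank_orthogonal_span_singleton_eq_sub_one hv0]
  set W := (ℝ ∙ (-u))ᗮ
  let σ : W → sphere (0 : E) 1 := (stereographic hv).symm
  have hσ0 : σ 0 = ⟨u, hu⟩ := by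
    have hcenter : stereographic hv ⟨u, hu⟩ = 0 := stereographic_neg_apply ⟨u, hu⟩
    have hu0 : u ≠ 0 := neg_ne_zero.1 hv0
    rw [← hcenter]
    exact (stereographic hv).left_inv (by simpa [eq_neg_iff_add_eq_zero, ← two_smul ℝ u] using hu0)
  have hσ_lip : LocallyLipschitz fun w ↦ (σ w : E) :=
    (contDiff_stereoInvFunAux.comp W.subtypeL.contDiff).locallyLipschitz
  obtain ⟨K, t, ht, hK⟩ := hσ_lip 0
  set s := t ∩ closedBall 0 1
  have hs : s ∈ 𝓝 (0 : W) := inter_mem ht (closedBall_mem_nhds _ one_pos)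
  refine ⟨(fun w ↦ (σ w : E)) '' s, ?_, ?_⟩
  · have himage : σ '' s ∈ 𝓝 ⟨u, hu⟩ :=
      hσ0 ▸ (isOpenEmbedding_stereographic_symm hv).isOpenMap.image_mem_nhds hs
    rw [← image_image (g := Subtype.val), nhdsWithin_eq_map_subtype_coe hu]
    exact image_mem_map himage
  · refine ((hK.mono inter_subset_left).hausdorffMeasure_image_le (Nat.cast_nonneg _)).trans_lt ?_
    refine ENNReal.mul_lt_top (by simp) ((measure_mono inter_subset_right).trans_lt
      (isCompact_closedBall _ _).measure_lt_top)

end SphereHausdorff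

section UniformUnitSphere

variable {d : ℕ}

lemma isRotationInvariant_uniformUnitSphere : IsRotationInvariant (uniformUnitSphere d) :=
  ((isRotationInvariant_hausdorffMeasure _).restrict_sphere 1).smul _

lemma ae_norm_eq_one_uniformUnitSphere : ∀ᵐ u ∂uniformUnitSphere d, ‖u‖ = 1 :=
  Measure.ae_smul_measure ((ae_restrict_mem isClosed_sphere.measurableSet).mono fun _ hu ↦
    mem_sphere_zero_iff_norm.1 hu) _

lemma isProbabilityMeasure_uniformUnitSphere (hd : 1 ≤ d) :
    IsProbabilityMeasure (uniformUnitSphere d) := by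
  have : Nontrivial (EuclideanSpace ℝ (Fin d)) := nontrivial_of_finrank_pos (R := ℝ) (by simpa)
  refine ProbabilityTheory.cond_isProbabilityMeasure_of_finite ?_ ?_
  · simpa using hausdorffMeasure_sphere_ne_zero (E := EuclideanSpace ℝ (Fin d))
  · simpa using (hausdorffMeasure_sphere_lt_top (E := EuclideanSpace ℝ (Fin d))).ne

lemma map_toSphere_eq_smul_uniformUnitSphere (hd : 1 ≤ d) :
    (volume : Measure (EuclideanSpace ℝ (Fin d))).toSphere.map Subtype.val =
      (d * volume (ball (0 : EuclideanSpace ℝ (Fin d)) 1)) • uniformUnitSphere d := by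
  have := isProbabilityMeasure_uniformUnitSphere hd
  have hsphere : ∀ᵐ u ∂(volume : Measure (EuclideanSpace ℝ (Fin d))).toSphere.map Subtype.val,
      ‖u‖ = 1 := by
    rw [ae_map_iff measurable_subtype_coe.aemeasurable
      (isClosed_eq continuous_norm continuous_const).measurableSet]
    exact ae_of_all _ norm_eq_of_mem_sphere
  have h := (IsRotationInvariant.map_toSphere fun φ ↦ φ.measurePreserving).measure_univ_smul_eq
    (isRotationInvariant_uniformUnitSphere (d := d)) hsphere ae_norm_eq_one_uniformUnitSphere
  simpa [Measure.map_apply measurable_subtype_coe MeasurableSet.univ] using h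

end UniformUnitSphere

section Ball

variable {E F : Type*} [NormedAddCommGroup E] [NormedAddCommGroup F]

lemma indicator_ball_smul_sphere [NormedSpace ℝ E] (f : E → F) (R : ℝ) {r : ℝ} (hr : 0 < r)
    (u : sphere (0 : E) 1) :
    (ball 0 R).indicator f (r • u) = (Iio R).indicator (fun s ↦ f (s • u)) r := by
  simp [indicator, norm_smul, abs_of_pos hr]

lemma integrable_indicator_ball [ProperSpace E] [MeasurableSpace E] [BorelSpace E] {μ : Measure E}
    {f : E → F} (hf : LocallyIntegrable f μ) (R : ℝ) : Integrable ((ball 0 R).indicator f) μ :=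
  ((hf.integrableOn_isCompact (isCompact_closedBall 0 R)).mono_set
    ball_subset_closedBall).integrable_indicator measurableSet_ball

end Ball

section Polar

variable {E F : Type*} [NormedAddCommGroup E] [NormedSpace ℝ E] [FiniteDimensional ℝ E]
  [MeasurableSpace E] [BorelSpace E] (μ : Measure E) [μ.IsAddHaarMeasure]
  [NormedAddCommGroup F]

lemma integrable_smul_sphere_prod {f : E → F} (hf : Integrable f μ) :
    Integrable (fun p : sphere (0 : E) 1 × Ioi (0 : ℝ) ↦ f ((p.2 : ℝ) • (p.1 : E)))
      (μ.toSphere.prod (.volumeIoiPow (finrank ℝ E - 1))) := by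
  rw [← μ.measurePreserving_homeomorphUnitSphereProd.integrable_comp_emb
    (Homeomorph.measurableEmbedding _)]
  have hval (x : ({0}ᶜ : Set E)) : ‖(x : E)‖ • ‖(x : E)‖⁻¹ • (x : E) = x :=
    smul_inv_smul₀ (norm_ne_zero_iff.2 x.2) _
  simpa [Function.comp_def, hval] using
    (integrableOn_iff_comap_subtypeVal (measurableSet_singleton 0).compl).1 hf.integrableOn

variable [NormedSpace ℝ F]

lemma integral_volumeIoiPow (n : ℕ) (g : ℝ → F) :
    ∫ r : Ioi (0 : ℝ), g r ∂.volumeIoiPow n = ∫ r in Ioi (0 : ℝ), r ^ n • g r := by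
  rw [Measure.volumeIoiPow, integral_withDensity_eq_integral_toReal_smul (by fun_prop) (by simp),
    ← integral_subtype_comap measurableSet_Ioi]
  refine integral_congr_ae (.of_forall fun r ↦ ?_)
  simp only [ENNReal.toReal_ofReal (pow_nonneg r.2.out.le n)]

lemma integrable_volumeIoiPow_iff (n : ℕ) (g : ℝ → F) :
    Integrable (fun r : Ioi (0 : ℝ) ↦ g r) (.volumeIoiPow n) ↔
      IntegrableOn (fun r ↦ r ^ n • g r) (Ioi 0) := by
  rw [Measure.volumeIoiPow, integrable_withDensity_iff_integrable_smul' (by fun_prop) (by simp),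
    integrableOn_iff_comap_subtypeVal measurableSet_Ioi]
  refine integrable_congr (.of_forall fun r ↦ ?_)
  simp only [ENNReal.toReal_ofReal (pow_nonneg r.2.out.le n), Function.comp_apply]

lemma integrableOn_pow_smul_integral_toSphere {f : E → F} (hf : Integrable f μ) :
    IntegrableOn (fun r : ℝ ↦
      r ^ (finrank ℝ E - 1) • ∫ u : sphere (0 : E) 1, f (r • u) ∂μ.toSphere) (Ioi 0) :=
  (integrable_volumeIoiPow_iff _ _).1 (integrable_smul_sphere_prod μ hf).integral_prod_right

lemma integral_eq_integral_Ioi_toSphere [Nontrivial E] {f : E → F} (hf : Integrable f μ) :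
    ∫ x, f x ∂μ = ∫ r in Ioi (0 : ℝ), r ^ (finrank ℝ E - 1) •
      ∫ u : sphere (0 : E) 1, f (r • u) ∂μ.toSphere := by
  have hval (x : ({0}ᶜ : Set E)) : ‖(x : E)‖ • ‖(x : E)‖⁻¹ • (x : E) = x :=
    smul_inv_smul₀ (norm_ne_zero_iff.2 x.2) _
  calc
    ∫ x, f x ∂μ = ∫ x : ({0}ᶜ : Set E), f x ∂(μ.comap (↑)) := by
      rw [integral_subtype_comap (measurableSet_singleton 0).compl f, restrict_compl_singleton]
    _ = ∫ p : sphere (0 : E) 1 × Ioi (0 : ℝ), f ((p.2 : ℝ) • (p.1 : E))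
        ∂μ.toSphere.prod (.volumeIoiPow (finrank ℝ E - 1)) := by
      simpa [hval] using μ.measurePreserving_homeomorphUnitSphereProd.integral_comp
        (Homeomorph.measurableEmbedding _) fun p ↦ f ((p.2 : ℝ) • (p.1 : E))
    _ = _ := by
      rw [integral_prod_symm _ (integrable_smul_sphere_prod μ hf),
        integral_volumeIoiPow _ fun r ↦ ∫ u : sphere (0 : E) 1, f (r • u) ∂μ.toSphere]

variable {μ} {f : E → F} {R : ℝ}

lemma intervalIntegrable_pow_smul_integral_toSphere (hf : LocallyIntegrable f μ) (hR : 0 ≤ R) :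
    IntervalIntegrable (fun r : ℝ ↦
      r ^ (finrank ℝ E - 1) • ∫ u : sphere (0 : E) 1, f (r • u) ∂μ.toSphere) volume 0 R := by
  rw [intervalIntegrable_iff_integrableOn_Ioo_of_le hR]
  refine ((integrableOn_pow_smul_integral_toSphere μ (integrable_indicator_ball hf R)).mono_set
    Ioo_subset_Ioi_self).congr_fun (fun r hr ↦ ?_) measurableSet_Ioo
  simp only [indicator_ball_smul_sphere f R hr.1, indicator_of_mem (mem_Iio.2 hr.2)]

lemma setIntegral_ball_eq_intervalIntegral_toSphere [Nontrivial E] (hf : LocallyIntegrable f μ)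
    (hR : 0 ≤ R) :
    ∫ x in ball 0 R, f x ∂μ = ∫ r in (0)..R, r ^ (finrank ℝ E - 1) •
      ∫ u : sphere (0 : E) 1, f (r • u) ∂μ.toSphere := by
  rw [← integral_indicator measurableSet_ball,
    integral_eq_integral_Ioi_toSphere μ (integrable_indicator_ball hf R),
    intervalIntegral.integral_of_le hR, integral_Ioc_eq_integral_Ioo,
    setIntegral_eq_of_subset_of_forall_sdiff_eq_zero measurableSet_Ioi
      (Ioo_subset_Ioi_self : Ioo 0 R ⊆ Ioi 0) fun r hr ↦ ?_]
  · refine setIntegral_congr_fun measurableSet_Ioo fun r hr ↦ ?_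
    simp only [indicator_ball_smul_sphere f R hr.1, indicator_of_mem (mem_Iio.2 hr.2)]
  · have hRr : r ∉ Iio R := fun h ↦ hr.2 ⟨hr.1, h⟩
    simp only [indicator_ball_smul_sphere f R hr.1, indicator_of_notMem hRr, integral_zero,
      smul_zero]

lemma continuousOn_integral_toSphere (hf : ContinuousOn f {0}ᶜ) :
    ContinuousOn (fun r : ℝ ↦ ∫ u : sphere (0 : E) 1, f (r • u) ∂μ.toSphere) (Ioi 0) := by
  rw [continuousOn_iff_continuous_domRestrict]
  have : LocallyCompactSpace (Ioi (0 : ℝ)) := isOpen_Ioi.locallyCompactSpace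
  have hcont : Continuous fun p : Ioi (0 : ℝ) × sphere (0 : E) 1 ↦ f ((p.1 : ℝ) • (p.2 : E)) :=
    hf.comp_continuous (by fun_prop) fun p ↦
      smul_ne_zero p.1.2.ne' (ne_zero_of_mem_unit_sphere p.2)
  have := continuous_parametric_integral_of_continuous (μ := μ.toSphere)
    (f := fun (r : Ioi (0 : ℝ)) (u : sphere (0 : E) 1) ↦ f ((r : ℝ) • (u : E))) hcont isCompact_univ
  simpa [domRestrict_def] using this

theorem hasDerivAt_setIntegral_ball [Nontrivial E] [CompleteSpace F] (hf : LocallyIntegrable f μ)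
    (hf' : ContinuousOn f {0}ᶜ) (hR : 0 < R) :
    HasDerivAt (fun r ↦ ∫ x in ball 0 r, f x ∂μ)
      (R ^ (finrank ℝ E - 1) • ∫ u : sphere (0 : E) 1, f (R • u) ∂μ.toSphere) R := by
  have hcont : ContinuousOn (fun r : ℝ ↦ r ^ (finrank ℝ E - 1) •
      ∫ u : sphere (0 : E) 1, f (r • u) ∂μ.toSphere) (Ioi 0) :=
    (continuous_pow _).continuousOn.smul (continuousOn_integral_toSphere hf')
  refine (intervalIntegral.integral_hasDerivAt_right
    (intervalIntegrable_pow_smul_integral_toSphere hf hR.le)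
    (hcont.stronglyMeasurableAtFilter isOpen_Ioi R hR)
    (hcont.continuousAt (Ioi_mem_nhds hR))).congr_of_eventuallyEq ?_
  filter_upwards [Ioi_mem_nhds hR] with r hr
  exact setIntegral_ball_eq_intervalIntegral_toSphere hf (le_of_lt hr)

end Polar

section MixedPartials

variable {X E F : Type*} [NormedAddCommGroup E] [NormedSpace ℝ E] [NormedAddCommGroup F]
  [NormedSpace ℝ F]

lemma tendstoUniformlyOnFilter_slope [TopologicalSpace X] {g g' : ℝ → X → F} {r : ℝ} {x : X}
    (hg : ∀ᶠ p in 𝓝 (r, x), HasDerivAt (g · p.2) (g' p.1 p.2) p.1)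
    (hg' : ContinuousAt (Function.uncurry g') (r, x)) :
    TendstoUniformlyOnFilter (fun s y ↦ slope (g · y) r s) (g' r) (𝓝[≠] r) (𝓝 x) := by
  rw [Metric.tendstoUniformlyOnFilter_iff]
  intro ε hε
  have hnear := hg.and (hg'.eventually (ball_mem_nhds _ (by positivity : 0 < ε / 4)))
  rw [nhds_prod_eq, (nhds_basis_ball.prod (𝓝 x).basis_sets).eventually_iff] at hnear
  obtain ⟨⟨δ, t⟩, ⟨hδ : 0 < δ, ht : t ∈ 𝓝 x⟩, hnear⟩ := hnear
  replace hnear {q : ℝ} (hq : q ∈ ball r δ) {y : X} (hy : y ∈ t) :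
      HasDerivAt (g · y) (g' q y) q ∧ dist (g' q y) (g' r x) < ε / 4 := @hnear (q, y) ⟨hq, hy⟩
  filter_upwards [prod_mem_prod (inter_mem (mem_nhdsWithin_of_mem_nhds (ball_mem_nhds r hδ))
    self_mem_nhdsWithin) ht]
  rintro ⟨s, y⟩ ⟨⟨hs : s ∈ ball r δ, hsr : s ≠ r⟩, hy : y ∈ t⟩
  have hbound (q : ℝ) (hq : q ∈ ball r δ) : ‖g' q y - g' r y‖ ≤ ε / 2 := by
    rw [← dist_eq_norm]
    linarith [dist_triangle_right (g' q y) (g' r y) (g' r x), (hnear hq hy).2,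
      (hnear (mem_ball_self hδ) hy).2]
  have hmean := (convex_ball r δ).norm_image_sub_le_of_norm_hasDerivWithin_le
    (f := fun q ↦ g q y - q • g' r y) (f' := fun q ↦ g' q y - g' r y)
    (fun q hq ↦ by simpa using
      ((hnear hq hy).1.fun_sub ((hasDerivAt_id' q).smul_const (g' r y))).hasDerivWithinAt)
    hbound (mem_ball_self hδ) hs
  have hslope : slope (g · y) r s - g' r y =
      (s - r)⁻¹ • ((g s y - s • g' r y) - (g r y - r • g' r y)) := by
    rw [slope_def_module, sub_sub_sub_comm, ← sub_smul, smul_sub _ (g s y - g r y),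
      inv_smul_smul₀ (sub_ne_zero.2 hsr)]
  have hpos : 0 < ‖s - r‖ := norm_pos_iff.2 (sub_ne_zero.2 hsr)
  rw [dist_comm, dist_eq_norm, hslope, norm_smul, norm_inv, inv_mul_lt_iff₀ hpos]
  nlinarith

theorem hasFDerivAt_of_hasDerivAt_hasFDerivAt {Ψ : ℝ → E → F} {P H : ℝ → E → E →L[ℝ] F} {G : E → F}
    {r : ℝ} {x : E} (hΨ : ∀ᶠ p in 𝓝 (r, x), HasFDerivAt (Ψ p.1) (P p.1 p.2) p.2)
    (hG : ∀ᶠ y in 𝓝 x, HasDerivAt (Ψ · y) (G y) r)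
    (hP : ∀ᶠ p in 𝓝 (r, x), HasDerivAt (P · p.2) (H p.1 p.2) p.1)
    (hH : ContinuousAt (Function.uncurry H) (r, x)) :
    HasFDerivAt G (H r x) x := by
  refine hasFDerivAt_of_tendstoUniformlyOnFilter (l := 𝓝[≠] r)
    (tendstoUniformlyOnFilter_slope hP hH) ?_ (hG.mono fun y hy ↦ hasDerivAt_iff_tendsto_slope.1 hy)
  rw [nhds_prod_eq] at hΨ
  have hr : ∀ᶠ p in 𝓝[≠] r ×ˢ 𝓝 x, HasFDerivAt (Ψ r) (P r p.2) p.2 :=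
    (hΨ.curry.self_of_nhds).prod_inr _
  filter_upwards [hΨ.filter_mono (prod_mono_left _ nhdsWithin_le_nhds), hr] with p hp hpr
  exact (hp.sub hpr).const_smul _

end MixedPartials

section LipschitzKernel

variable {E : Type*} [NormedAddCommGroup E] [NormedSpace ℝ E] [FiniteDimensional ℝ E]
  [MeasurableSpace E] [BorelSpace E] {μ : Measure E} [μ.IsAddHaarMeasure] {f K : E → ℝ} {C : ℝ≥0}

theorem hasFDerivAt_integral_mul_of_lipschitzWith (hf : LocallyIntegrable f μ)
    (hK : LipschitzWith C K) (hK' : HasCompactSupport K) (y : E) :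
    HasFDerivAt (fun y ↦ ∫ w, f w * K (w - y) ∂μ) (∫ w, -(f w • fderiv ℝ K (w - y)) ∂μ) y := by
  set S : Set E := closedBall y 1 + tsupport K
  have hS : IsCompact S := (isCompact_closedBall y 1).add hK'
  have hzero {w : E} (hw : w ∉ S) {z : E} (hz : z ∈ closedBall y 1) : K (w - z) = 0 :=
    image_eq_zero_of_notMem_tsupport fun h ↦ hw ⟨z, hz, w - z, h, add_sub_cancel _ _⟩
  have hy : y ∈ closedBall y 1 := mem_closedBall_self zero_le_one
  have hK_shift (z : E) : Continuous fun w ↦ K (w - z) := hK.continuous.comp (by fun_prop)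
  have hmeas (z : E) : AEStronglyMeasurable (fun w ↦ f w * K (w - z)) μ :=
    hf.aestronglyMeasurable.mul (hK_shift z).aestronglyMeasurable
  have hmeas' : AEStronglyMeasurable (fun w ↦ -(f w • fderiv ℝ K (w - y))) μ :=
    (hf.aestronglyMeasurable.smul
      ((measurable_fderiv ℝ K).comp (measurable_sub_const y)).aestronglyMeasurable).neg
  have hint : Integrable (fun w ↦ f w * K (w - y)) μ :=
    hf.integrable_smul_right_of_hasCompactSupport (hK_shift y)
      (hK'.comp_homeomorph (Homeomorph.subRight y))
  have hbound : Integrable (S.indicator fun w ↦ C * |f w|) μ :=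
    IntegrableOn.integrable_indicator ((hf.integrableOn_isCompact hS).abs.const_mul _)
      hS.measurableSet
  have hlip (w z : E) (hz : z ∈ closedBall y 1) :
      ‖f w * K (w - z) - f w * K (w - y)‖ ≤ S.indicator (fun w ↦ C * |f w|) w * ‖z - y‖ := by
    by_cases hw : w ∈ S
    · rw [← mul_sub, norm_mul, Real.norm_eq_abs, indicator_of_mem hw, mul_comm (C : ℝ), mul_assoc]
      gcongr
      simpa [norm_sub_rev] using hK.norm_sub_le (w - z) (w - y)
    · simp [hw, hzero hw hz, hzero hw hy]
  have hderiv : ∀ᵐ w ∂μ,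
      HasFDerivAt (fun z ↦ f w * K (w - z)) (-(f w • fderiv ℝ K (w - y))) y := by
    filter_upwards [(measurePreserving_sub_right μ y).quasiMeasurePreserving.ae
      hK.ae_differentiableAt] with w hw
    simpa [Function.comp_def] using
      (hw.hasFDerivAt.comp y ((hasFDerivAt_id y).const_sub w)).const_mul (f w)
  exact (hasFDerivAt_integral_of_dominated_loc_of_lip' (closedBall_mem_nhds y one_pos)
    (fun z _ ↦ hmeas z) hint hmeas' (.of_forall hlip) hbound hderiv).2

end LipschitzKernel

section EpanechnikovKernel

/-- The (unnormalized) Epanechnikov kernel: the positive part of the paraboloid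
`v ↦ (R ^ 2 - ‖v‖ ^ 2) / 2`. -/
noncomputable def epanechnikovKernel {E : Type*} [Norm E] (R : ℝ) (v : E) : ℝ :=
  max ((R ^ 2 - ‖v‖ ^ 2) / 2) 0

section Normed

variable {E : Type*} [NormedAddCommGroup E] {R : ℝ}

lemma epanechnikovKernel_eq_indicator (hR : 0 ≤ R) :
    epanechnikovKernel R = (ball (0 : E) R).indicator fun v ↦ (R ^ 2 - ‖v‖ ^ 2) / 2 := by
  ext v
  rw [epanechnikovKernel]
  by_cases hv : ‖v‖ < R
  · rw [indicator_of_mem (mem_ball_zero_iff.2 hv), max_eq_left]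
    have := pow_le_pow_left₀ (norm_nonneg v) hv.le 2
    linarith
  · rw [indicator_of_notMem (mt mem_ball_zero_iff.1 hv), max_eq_right]
    have := pow_le_pow_left₀ hR (not_lt.1 hv) 2
    linarith

lemma epanechnikovKernel_eq_min (hR : 0 ≤ R) (v : E) :
    epanechnikovKernel R v = (R ^ 2 - min ‖v‖ R ^ 2) / 2 := by
  rw [epanechnikovKernel_eq_indicator hR]
  by_cases hv : ‖v‖ < R
  · rw [indicator_of_mem (mem_ball_zero_iff.2 hv), min_eq_left hv.le]
  · rw [indicator_of_notMem (mt mem_ball_zero_iff.1 hv), min_eq_right (not_lt.1 hv)]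
    ring

lemma lipschitzWith_epanechnikovKernel (R : ℝ≥0) :
    LipschitzWith R (epanechnikovKernel (E := E) R) := by
  refine LipschitzWith.of_dist_le_mul fun v w ↦ ?_
  have hmin : |min ‖v‖ (R : ℝ) - min ‖w‖ R| ≤ dist v w := calc
    _ ≤ max |‖v‖ - ‖w‖| |(R : ℝ) - R| := abs_min_sub_min_le_max ..
    _ ≤ dist v w := by simpa [dist_eq_norm] using abs_norm_sub_norm_le v w
  have hsum : |min ‖v‖ (R : ℝ) + min ‖w‖ R| ≤ 2 * R := by
    rw [abs_of_nonneg (by positivity)]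
    linarith [min_le_right ‖v‖ (R : ℝ), min_le_right ‖w‖ (R : ℝ)]
  calc
    dist (epanechnikovKernel (R : ℝ) v) (epanechnikovKernel (R : ℝ) w) =
        |min ‖v‖ (R : ℝ) + min ‖w‖ R| * |min ‖v‖ (R : ℝ) - min ‖w‖ R| / 2 := by
      rw [epanechnikovKernel_eq_min R.coe_nonneg, epanechnikovKernel_eq_min R.coe_nonneg,
        Real.dist_eq, ← abs_mul, ← sq_sub_sq, ← abs_neg, ← abs_two, ← abs_div, abs_two]
      ring_nf
    _ ≤ 2 * R * dist v w / 2 := by gcongr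
    _ = R * dist v w := by ring

lemma hasCompactSupport_epanechnikovKernel [ProperSpace E] (hR : 0 ≤ R) :
    HasCompactSupport (epanechnikovKernel (E := E) R) := by
  refine HasCompactSupport.intro (isCompact_closedBall (0 : E) R) fun v hv ↦ ?_
  rw [epanechnikovKernel_eq_indicator hR,
    indicator_of_notMem fun h ↦ hv (ball_subset_closedBall h)]

end Normed

variable {E : Type*} [NormedAddCommGroup E] [InnerProductSpace ℝ E] {R : ℝ}

lemma fderiv_epanechnikovKernel (hR : 0 ≤ R) {v : E} (hv : ‖v‖ ≠ R) :
    fderiv ℝ (epanechnikovKernel R) v = -(ball 0 R).indicator (innerSL ℝ) v := by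
  rw [epanechnikovKernel_eq_indicator hR]
  rcases hv.lt_or_gt with hlt | hgt
  · have hmem : v ∈ ball 0 R := mem_ball_zero_iff.2 hlt
    have heq : (ball (0 : E) R).indicator (fun v ↦ (R ^ 2 - ‖v‖ ^ 2) / 2) =ᶠ[𝓝 v]
        fun v ↦ (R ^ 2 - ‖v‖ ^ 2) / 2 :=
      eventually_of_mem (isOpen_ball.mem_nhds hmem) fun w hw ↦ indicator_of_mem hw _
    rw [heq.fderiv_eq, indicator_of_mem hmem]
    simp_rw [div_eq_mul_inv]
    refine (HasFDerivAt.congr_fderiv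
      (((hasStrictFDerivAt_norm_sq v).hasFDerivAt.const_sub _).mul_const _) ?_).fderiv
    ext w
    simp
  · have hmem : v ∉ closedBall 0 R := by simpa using hgt
    have heq : (ball (0 : E) R).indicator (fun v ↦ (R ^ 2 - ‖v‖ ^ 2) / 2) =ᶠ[𝓝 v] 0 :=
      eventually_of_mem (isClosed_closedBall.isOpen_compl.mem_nhds hmem) fun w hw ↦
        indicator_of_notMem (fun h ↦ hw (ball_subset_closedBall h)) _
    rw [heq.fderiv_eq, indicator_of_notMem fun h ↦ hmem (ball_subset_closedBall h)]
    simp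

variable [FiniteDimensional ℝ E] [MeasurableSpace E] [BorelSpace E] {μ : Measure E}
  [μ.IsAddHaarMeasure] {f : E → ℝ}

lemma hasFDerivAt_integral_mul_epanechnikovKernel (hf : LocallyIntegrable f μ) (hR : 0 < R)
    (y : E) :
    HasFDerivAt (fun y ↦ ∫ w, f w * epanechnikovKernel R (w - y) ∂μ)
      (∫ v in ball 0 R, f (y + v) • innerSL ℝ v ∂μ) y := by
  lift R to ℝ≥0 using hR.le
  convert hasFDerivAt_integral_mul_of_lipschitzWith hf (lipschitzWith_epanechnikovKernel R)
    (hasCompactSupport_epanechnikovKernel hR.le) y using 1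
  rw [← integral_add_left_eq_self (μ := μ) _ y, ← integral_indicator measurableSet_ball]
  have hsphere : ∀ᵐ v ∂μ, v ∉ sphere 0 (R : ℝ) :=
    measure_eq_zero_iff_ae_notMem.1 (μ.addHaar_sphere_of_ne_zero 0 hR.ne')
  refine integral_congr_ae (hsphere.mono fun v hv ↦ ?_)
  simp only [add_sub_cancel_left]
  rw [fderiv_epanechnikovKernel hR.le (mt mem_sphere_zero_iff_norm.2 hv)]
  by_cases hmem : v ∈ ball 0 (R : ℝ) <;> simp [hmem]

lemma hasDerivAt_integral_mul_epanechnikovKernel [Nontrivial E] (hf : Continuous f) (hR : 0 < R)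
    (y : E) :
    HasDerivAt (fun r ↦ ∫ w, f w * epanechnikovKernel r (w - y) ∂μ)
      (R * ∫ v in ball 0 R, f (y + v) ∂μ) R := by
  have hcont : Continuous fun v ↦ f (y + v) := by fun_prop
  have hcont' : Continuous fun v ↦ ‖v‖ ^ 2 * f (y + v) := by fun_prop
  have hint {g : E → ℝ} (hg : Continuous g) (r : ℝ) : IntegrableOn g (ball 0 r) μ :=
    (hg.locallyIntegrable.integrableOn_isCompact (isCompact_closedBall 0 r)).mono_set
      ball_subset_closedBall
  have hsplit : (fun r ↦ ∫ w, f w * epanechnikovKernel r (w - y) ∂μ) =ᶠ[𝓝 R] fun r ↦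
      (r ^ 2 * (∫ v in ball 0 r, f (y + v) ∂μ) - ∫ v in ball 0 r, ‖v‖ ^ 2 * f (y + v) ∂μ) / 2 := by
    filter_upwards [Ioi_mem_nhds hR] with r hr
    rw [← integral_const_mul, ← integral_sub ((hint hcont r).const_mul _) (hint hcont' r),
      ← integral_div, ← integral_add_left_eq_self (μ := μ) _ y,
      ← integral_indicator measurableSet_ball]
    congr with v
    rw [epanechnikovKernel_eq_indicator (le_of_lt hr), add_sub_cancel_left]
    by_cases hmem : v ∈ ball 0 r
    · simp only [indicator_of_mem hmem]
      ring
    · simp only [indicator_of_notMem hmem, mul_zero]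
  have h1 := hasDerivAt_setIntegral_ball hcont.locallyIntegrable hcont.continuousOn hR (μ := μ)
  have h2 := hasDerivAt_setIntegral_ball hcont'.locallyIntegrable hcont'.continuousOn hR (μ := μ)
  refine HasDerivAt.congr_of_eventuallyEq ?_ hsplit
  refine ((((hasDerivAt_pow 2 R).fun_mul h1).fun_sub h2).div_const 2).congr_deriv ?_
  simp only [Nat.cast_ofNat, Nat.add_one_sub_one, pow_one, smul_eq_mul, norm_smul,
    Real.norm_eq_abs, abs_of_pos hR, norm_eq_of_mem_sphere, mul_one, integral_const_mul]
  ring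

lemma continuous_integral_toSphere_smul_innerSL (hf : Continuous f) :
    Continuous fun p : ℝ × E ↦ ∫ u : sphere (0 : E) 1,
      f (p.2 + p.1 • u) • innerSL ℝ (p.1 • (u : E)) ∂μ.toSphere := by
  have := continuous_parametric_integral_of_continuous (μ := μ.toSphere)
    (f := fun (p : ℝ × E) (u : sphere (0 : E) 1) ↦
      f (p.2 + p.1 • (u : E)) • innerSL ℝ (p.1 • (u : E))) (by fun_prop) isCompact_univ
  simpa only [Measure.restrict_univ] using this

theorem hasFDerivAt_setIntegral_ball [Nontrivial E] (hf : Continuous f) (hR : 0 < R) (x : E) :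
    HasFDerivAt (fun y ↦ ∫ v in ball 0 R, f (y + v) ∂μ)
      (R ^ (finrank ℝ E - 1) •
        ∫ u : sphere (0 : E) 1, f (x + R • u) • innerSL ℝ (u : E) ∂μ.toSphere) x := by
  have hR_near : ∀ᶠ p : ℝ × E in 𝓝 (R, x), 0 < p.1 :=
    continuous_fst.continuousAt.eventually (lt_mem_nhds hR)
  have hmixed := hasFDerivAt_of_hasDerivAt_hasFDerivAt (r := R) (x := x)
    (Ψ := fun r y ↦ ∫ w, f w * epanechnikovKernel r (w - y) ∂μ)
    (P := fun r y ↦ ∫ v in ball 0 r, f (y + v) • innerSL ℝ v ∂μ)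
    (H := fun r y ↦ r ^ (finrank ℝ E - 1) •
      ∫ u : sphere (0 : E) 1, f (y + r • u) • innerSL ℝ (r • (u : E)) ∂μ.toSphere)
    (hR_near.mono fun p hp ↦
      hasFDerivAt_integral_mul_epanechnikovKernel hf.locallyIntegrable hp p.2)
    (.of_forall fun y ↦ hasDerivAt_integral_mul_epanechnikovKernel hf hR y)
    (hR_near.mono fun p hp ↦ by
      have hcont : Continuous fun v ↦ f (p.2 + v) • innerSL ℝ v := by fun_prop
      exact hasDerivAt_setIntegral_ball hcont.locallyIntegrable hcont.continuousOn hp)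
    ((continuous_fst.pow _).smul (continuous_integral_toSphere_smul_innerSL hf)).continuousAt
  refine ((hmixed.const_smul R⁻¹).congr_of_eventuallyEq ?_).congr_fderiv ?_
  · exact .of_forall fun y ↦ (inv_mul_cancel_left₀ hR.ne' _).symm
  · rw [smul_comm, ← integral_smul]
    congr with u e
    simp [mul_left_comm _ R, mul_inv_cancel_left₀ hR.ne']

theorem hasGradientAt_setIntegral_ball [Nontrivial E] (hf : Continuous f) (hR : 0 < R) (x : E) :
    HasGradientAt (fun y ↦ ∫ v in ball 0 R, f (y + v) ∂μ)
      (R ^ (finrank ℝ E - 1) • ∫ u : sphere (0 : E) 1, f (x + R • u) • (u : E) ∂μ.toSphere) x := by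
  rw [hasGradientAt_iff_hasFDerivAt]
  refine (hasFDerivAt_setIntegral_ball hf hR x).congr_fderiv ?_
  have hdual : Integrable (fun u : sphere (0 : E) 1 ↦ f (x + R • u) • innerSL ℝ (u : E))
      μ.toSphere :=
    Continuous.integrable_of_hasCompactSupport (by fun_prop) (.of_compactSpace _)
  have hvec : Integrable (fun u : sphere (0 : E) 1 ↦ f (x + R • u) • (u : E)) μ.toSphere :=
    Continuous.integrable_of_hasCompactSupport (by fun_prop) (.of_compactSpace _)
  ext e
  rw [map_smul]
  simp only [smul_apply, ContinuousLinearMap.integral_apply hdual,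
    InnerProductSpace.toDual_apply_apply, real_inner_comm e, ← integral_inner hvec,
    inner_smul_right]
  simp [real_inner_comm]

end EpanechnikovKernel

section EuclideanSpace

lemma hasGradientAt_const_mul {E : Type*} [NormedAddCommGroup E] [InnerProductSpace ℝ E]
    [CompleteSpace E] {f : E → ℝ} {f' x : E} (hf : HasGradientAt f f' x) (c : ℝ) :
    HasGradientAt (fun y ↦ c * f y) (c • f') x := by
  rw [hasGradientAt_iff_hasFDerivAt] at hf ⊢
  simpa using hf.const_mul c

variable {d : ℕ} {F : Type*} [NormedAddCommGroup F] [NormedSpace ℝ F]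

lemma integral_toSphere_eq_smul_integral_uniformUnitSphere (hd : 1 ≤ d)
    (g : EuclideanSpace ℝ (Fin d) → F) :
    ∫ u : sphere (0 : EuclideanSpace ℝ (Fin d)) 1, g u ∂volume.toSphere =
      (d * volume.real (ball (0 : EuclideanSpace ℝ (Fin d)) 1)) •
        ∫ u, g u ∂uniformUnitSphere d := by
  rw [← (MeasurableEmbedding.subtype_coe isClosed_sphere.measurableSet).integral_map,
    map_toSphere_eq_smul_uniformUnitSphere hd, integral_smul_measure]
  simp [measureReal_def]

lemma integral_comp_smul_uniformUnitBall {δ : ℝ} (hδ : 0 < δ) (g : EuclideanSpace ℝ (Fin d) → F) :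
    ∫ v, g (δ • v) ∂uniformUnitBall d =
      (δ ^ d * volume.real (ball (0 : EuclideanSpace ℝ (Fin d)) 1))⁻¹ • ∫ v in ball 0 δ, g v := by
  have hball : ball (0 : EuclideanSpace ℝ (Fin d)) 1 =ᵐ[volume] closedBall 0 1 := by
    refine ae_eq_of_subset_of_measure_ge ball_subset_closedBall ?_
      measurableSet_ball.nullMeasurableSet measure_closedBall_lt_top.ne
    rw [Measure.addHaar_unitClosedBall_eq_addHaar_unitBall]
  rw [uniformUnitBall, integral_smul_measure, ← setIntegral_congr_set hball, ← measure_congr hball,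
    Measure.setIntegral_comp_smul_of_pos _ _ _ hδ, smul_unitBall_of_pos hδ, smul_smul,
    finrank_euclideanSpace_fin, ENNReal.toReal_inv, ← measureReal_def, mul_inv_rev]

theorem ball_smoothing_gradient_general (hd : 1 ≤ d) {f : EuclideanSpace ℝ (Fin d) → ℝ}
    (hf : Continuous f) {δ : ℝ} (hδ : 0 < δ) (x : EuclideanSpace ℝ (Fin d)) :
    HasGradientAt (fun y ↦ ∫ v, f (y + δ • v) ∂uniformUnitBall d)
      ((d / δ) • ∫ u, f (x + δ • u) • u ∂uniformUnitSphere d) x := by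
  have : Nontrivial (EuclideanSpace ℝ (Fin d)) := nontrivial_of_finrank_pos (R := ℝ) (by simpa)
  set V := volume.real (ball (0 : EuclideanSpace ℝ (Fin d)) 1)
  have hV : V ≠ 0 :=
    (ENNReal.toReal_pos (measure_ball_pos _ _ one_pos).ne' measure_ball_lt_top.ne).ne'
  have hgrad := hasGradientAt_const_mul (hasGradientAt_setIntegral_ball (μ := volume) hf hδ x)
    (δ ^ d * V)⁻¹
  have hscalar : (δ ^ d * V)⁻¹ * δ ^ (d - 1) * (d * V) = d / δ := by
    rw [← pow_sub_one_mul (Nat.one_le_iff_ne_zero.1 hd) δ]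
    field_simp
  rw [integral_toSphere_eq_smul_integral_uniformUnitSphere hd fun u ↦ f (x + δ • u) • u,
    smul_smul, smul_smul, finrank_euclideanSpace_fin, hscalar] at hgrad
  exact hgrad.congr_of_eventuallyEq
    (.of_forall fun y ↦ integral_comp_smul_uniformUnitBall hδ fun v ↦ f (y + v))

end EuclideanSpace

/-- Sphere-sampling gradient identity for ball smoothing (Flaxman et al.).
If `f : ℝ^d → ℝ` is Lipschitz and `δ > 0`, then the ball-smoothed function
`f̂ x = E_{v ∼ Unif(𝔹^d)}[f (x + δ v)]` is differentiable with gradient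
`∇ f̂ x = (d/δ) • E_{u ∼ Unif(S^{d−1})}[f (x + δ u) • u]`. -/
theorem ball_smoothing_gradient {d : ℕ} (hd : 1 ≤ d)
    (f : EuclideanSpace ℝ (Fin d) → ℝ)
    (hf : ∃ L : ℝ, ∀ x y, |f x - f y| ≤ L * ‖x - y‖)
    (δ : ℝ) (hδ : 0 < δ) (x : EuclideanSpace ℝ (Fin d)) :
    HasGradientAt (fun y => ∫ v, f (y + δ • v) ∂(uniformUnitBall d))
      (((d : ℝ) / δ) • ∫ u, f (x + δ • u) • u ∂(uniformUnitSphere d)) x := by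
  obtain ⟨L, hL⟩ := hf
  have hL' (y z) : dist (f y) (f z) ≤ L.toNNReal * dist y z := by
    rw [Real.dist_eq, dist_eq_norm]
    exact (hL y z).trans (by gcongr; exact L.le_coe_toNNReal)
  exact ball_smoothing_gradient_general hd (LipschitzWith.of_dist_le_mul hL').continuous hδ x
end
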